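/- arXiv:2112.10405 — 2 statements merged into one kernel-verified Lean document; each statement's English description precedes it below -/
import Mathlib

section
/- Whatever the value of the memory parameter p in [0,1], the estimator p̂_n is strongly consistent: p̂_n converges to p almost surely as n → ∞. -/
open MeasureTheory ProbabilityTheory Filter Finset
open scoped BoundedContinuousFunction ENNReal NNReal Topology

noncomputable section

variable {Ω : Type*}

/-- Position of the elephant random walk: `S n = X 1 + ⋯ + X n`. -/
def erwS (X : ℕ → Ω → ℝ) (n : ℕ) (ω : Ω) : ℝ :=
  ∑ k ∈ Finset.Icc 1 n, X k ω

/-- `V n = 4 ∑_{k=1}^{n-1} (S k / k)²`, the approximate conditional Fisher information. -/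
def erwV (X : ℕ → Ω → ℝ) (n : ℕ) (ω : Ω) : ℝ :=
  4 * ∑ k ∈ Finset.Icc 1 (n - 1), (erwS X k ω / k) ^ 2

/-- The quasi-maximum likelihood estimator `p̂ n` of the memory parameter. -/
def erwPhat (X : ℕ → Ω → ℝ) (n : ℕ) (ω : Ω) : ℝ :=
  (∑ k ∈ Finset.Icc 1 (n - 1), (erwS X k ω / k) * (X (k + 1) ω + erwS X k ω / k)) /
    (2 * ∑ k ∈ Finset.Icc 1 (n - 1), (erwS X k ω / k) ^ 2)

/-- The elephant random walk hypotheses with memory parameter `p ∈ [0,1]`: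
the steps take values in `{-1, 1}`, are adapted to the filtration `ℱ`
(which plays the role of `σ(X_1, …, X_n)`), and
`E[X_{n+1} | ℱ_n] = (2p - 1) · S_n / n` almost surely. -/
def IsERW {m0 : MeasurableSpace Ω} (μ : Measure Ω) (ℱ : Filtration ℕ m0)
    (X : ℕ → Ω → ℝ) (p : ℝ) : Prop :=
  0 ≤ p ∧ p ≤ 1 ∧
  (∀ n, 1 ≤ n → ∀ ω, X n ω = 1 ∨ X n ω = -1) ∧
  (∀ n, 1 ≤ n → Measurable[ℱ n] (X n)) ∧
  (∀ n, 1 ≤ n → μ[X (n + 1) | ℱ n] =ᵐ[μ] fun ω => (2 * p - 1) * (erwS X n ω / n))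

theorem erw_kron (x B : ℕ → ℝ) (L : ℝ) (hmono : Monotone B) (hB0 : ∀ n, 0 < B n)
    (hB : Tendsto B atTop atTop)
    (hN : Tendsto (fun n => ∑ k ∈ Finset.range n, x k / B (k + 1)) atTop (𝓝 L)) :
    Tendsto (fun n => (∑ k ∈ Finset.range n, x k) / B n) atTop (𝓝 0) := by
  set N : ℕ → ℝ := fun n => ∑ k ∈ Finset.range n, x k / B (k + 1) with hNdef
  have hid : ∀ n, ∑ k ∈ Finset.range n, x k =
      B n * (N n - L) - ∑ k ∈ Finset.range n, (N k - L) * (B (k + 1) - B k) + B 0 * L := by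
    intro n
    induction n with
    | zero => simp [hNdef]
    | succ n ih =>
      have h1 : N (n + 1) = N n + x n / B (n + 1) := by
        simp [hNdef, Finset.sum_range_succ]
      rw [Finset.sum_range_succ, Finset.sum_range_succ, ih, h1]
      have := (hB0 (n + 1)).ne'
      field_simp
      ring
  have hsum : ∀ n, ∑ k ∈ Finset.range n, (B (k + 1) - B k) = B n - B 0 := fun n =>
    Finset.sum_range_sub B n
  have hNL : Tendsto (fun n => N n - L) atTop (𝓝 0) := by
    simpa using hN.sub_const L
  have hlo : (fun n => (N n - L) * (B (n + 1) - B n)) =o[atTop] (fun n => B (n + 1) - B n) := by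
    have h := ((Asymptotics.isLittleO_one_iff ℝ).2 hNL).mul_isBigO
      (Asymptotics.isBigO_refl (fun n => B (n + 1) - B n) atTop)
    simpa using h
  have h2 := hlo.sum_range (fun n => sub_nonneg.2 (hmono (Nat.le_succ n)))
    (by simp only [hsum]; exact tendsto_atTop_add_const_right _ _ hB)
  simp only [hsum] at h2
  have h3 : (fun n => B n - B 0) =O[atTop] B := by
    refine Asymptotics.IsBigO.of_bound 1 (Eventually.of_forall fun n => ?_)
    rw [Real.norm_of_nonneg (sub_nonneg.2 (hmono (Nat.zero_le n))),
      Real.norm_of_nonneg (hB0 n).le]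
    linarith [hB0 0]
  have h4 := (h2.trans_isBigO h3).tendsto_div_nhds_zero
  have h5 : Tendsto (fun n => B 0 * L / B n) atTop (𝓝 0) := hB.const_div_atTop _
  have h6 := (hNL.sub h4).add h5
  simp only [sub_zero, add_zero] at h6
  refine h6.congr fun n => ?_
  rw [hid n]
  have := (hB0 n).ne'
  field_simp

theorem erw_determ (u X : ℕ → ℝ) (a C : ℝ) (ha : |a| ≤ 1)
    (hX : ∀ k, X k ^ 2 = 1)
    (hrec : ∀ k : ℕ, ((k : ℝ) + 2) * u (k + 1) = (k + 1) * u k + X k)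
    (hC : ∀ n, ∑ k ∈ Finset.range n, u k ^ 2 ≤ C)
    (hM : Tendsto (fun n => (∑ k ∈ Finset.range n, u k * (X k - a * u k)) /
      (1 + ∑ k ∈ Finset.range n, (u k ^ 2 + 1 / ((k : ℝ) + 1)))) atTop (𝓝 0)) : False := by
  have hstep : ∀ k : ℕ, (k + 1) * u k ^ 2 + 2 * (u k * (X k - a * u k)) + 2 * a * u k ^ 2
      + 1 / ((k : ℝ) + 1) - 2 * u (k + 1) ^ 2 ≤ ((k : ℝ) + 2) * u (k + 1) ^ 2 := by
    intro k
    have hk : (0 : ℝ) < k + 1 := by positivity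
    have e1 : (((k : ℝ) + 2) * u (k + 1)) ^ 2 / (k + 1) =
        (k + 1) * u k ^ 2 + 2 * u k * X k + 1 / ((k : ℝ) + 1) := by
      rw [hrec k, div_eq_iff hk.ne']
      have h1 : 1 / ((k : ℝ) + 1) * (k + 1) = 1 := by field_simp
      linear_combination hX k - h1
    have e2 : (((k : ℝ) + 2) * u (k + 1)) ^ 2 / (k + 1) ≤ ((k : ℝ) + 4) * u (k + 1) ^ 2 := by
      rw [div_le_iff₀ hk]
      nlinarith [sq_nonneg (u (k + 1)), mul_nonneg (Nat.cast_nonneg (α := ℝ) k) (sq_nonneg (u (k + 1)))]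
    nlinarith
  have hsum : ∀ n : ℕ, 2 * (∑ k ∈ Finset.range n, u k * (X k - a * u k))
      + 2 * a * (∑ k ∈ Finset.range n, u k ^ 2) + (∑ k ∈ Finset.range n, 1 / ((k : ℝ) + 1))
      - 2 * (∑ k ∈ Finset.range n, u (k + 1) ^ 2) ≤ ((n : ℝ) + 1) * u n ^ 2 := by
    intro n
    induction n with
    | zero => simp; positivity
    | succ n ih =>
      simp only [Finset.sum_range_succ]
      have := hstep n
      push_cast
      nlinarith
  have hH := Real.tendsto_sum_range_one_div_nat_succ_atTop
  have hC0 : 0 ≤ C := by simpa using hC 0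
  have hC2 : ∀ n, ∑ k ∈ Finset.range n, u (k + 1) ^ 2 ≤ C := by
    intro n
    have := hC (n + 1)
    rw [Finset.sum_range_succ'] at this
    nlinarith [sq_nonneg (u 0)]
  have hev : ∀ᶠ n : ℕ in atTop, 1 / ((n : ℝ) + 1) ≤ u n ^ 2 := by
    have hM' := hM.eventually (Ioo_mem_nhds (show (-(1 / 4) : ℝ) < 0 by norm_num)
      (show (0 : ℝ) < 1 by norm_num))
    filter_upwards [hM', hH.eventually_ge_atTop (2 * (1 + (1 + C) / 2 + 4 * C))] with n h1 h2
    have hH0 : 0 ≤ ∑ k ∈ Finset.range n, 1 / ((k : ℝ) + 1) :=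
      Finset.sum_nonneg fun k _ => by positivity
    have hU0 : 0 ≤ ∑ k ∈ Finset.range n, u k ^ 2 := Finset.sum_nonneg fun k _ => by positivity
    have h3 := h1.1
    rw [Finset.sum_add_distrib, lt_div_iff₀ (by linarith)] at h3
    have h4 := hC n
    have h5 := hC2 n
    have h6 := hsum n
    have h7 : -C ≤ a * ∑ k ∈ Finset.range n, u k ^ 2 := by
      nlinarith [(abs_le.1 ha).1]
    rw [div_le_iff₀ (by positivity)]
    linarith
  have hs : Summable (fun n => u n ^ 2) := summable_of_sum_range_le (fun n => sq_nonneg _) hC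
  have hs2 : Summable (fun n : ℕ => 1 / ((n : ℝ) + 1)) := by
    refine summable_of_isBigO_nat hs (Asymptotics.IsBigO.of_bound 1 ?_)
    filter_upwards [hev] with n hn
    rw [Real.norm_of_nonneg (by positivity), Real.norm_of_nonneg (by positivity), one_mul]
    exact hn
  exact (not_summable_iff_tendsto_nat_atTop_of_nonneg (fun n => by positivity)).2 hH hs2

/-- Normalising sequence. -/
def erwB (u : ℕ → Ω → ℝ) (b : ℕ → ℝ) (n : ℕ) (ω : Ω) : ℝ :=
  1 + ∑ k ∈ Finset.range n, (u k ω ^ 2 + b k)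

theorem erwB_succ (u : ℕ → Ω → ℝ) (b : ℕ → ℝ) (n : ℕ) (ω : Ω) :
    erwB u b (n + 1) ω = erwB u b n ω + (u n ω ^ 2 + b n) := by
  simp [erwB, Finset.sum_range_succ, add_assoc]

theorem erwB_one_le (u : ℕ → Ω → ℝ) (b : ℕ → ℝ) (hb : ∀ k, 0 ≤ b k) (n : ℕ) (ω : Ω) :
    1 ≤ erwB u b n ω := by
  have : 0 ≤ ∑ k ∈ Finset.range n, (u k ω ^ 2 + b k) :=
    Finset.sum_nonneg fun k _ => add_nonneg (sq_nonneg _) (hb k)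
  unfold erwB; linarith

theorem erw_mart {m0 : MeasurableSpace Ω} (μ : Measure Ω) [IsProbabilityMeasure μ]
    (𝒢 : Filtration ℕ m0) (u ξ : ℕ → Ω → ℝ) (b : ℕ → ℝ) (hb : ∀ k, 0 ≤ b k)
    (hu : ∀ k, Measurable[𝒢 k] (u k)) (hu1 : ∀ k ω, |u k ω| ≤ 1)
    (hξ : ∀ k, Measurable[𝒢 (k + 1)] (ξ k)) (hξ2 : ∀ k ω, |ξ k ω| ≤ 2)
    (hc : ∀ k, μ[ξ k | 𝒢 k] =ᵐ[μ] 0) :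
    ∀ᵐ ω ∂μ, ∃ c, Tendsto (fun n => ∑ k ∈ Finset.range n,
      u k ω * ξ k ω / erwB u b (k + 1) ω) atTop (𝓝 c) := by
  have hB1 := erwB_one_le u b hb
  have hBpos : ∀ n ω, 0 < erwB u b n ω := fun n ω => lt_of_lt_of_le one_pos (hB1 n ω)
  have hBm : ∀ n, Measurable[𝒢 n] (erwB u b (n + 1)) := by
    intro n
    have : Measurable[𝒢 n] (fun ω => 1 + ∑ k ∈ Finset.range (n + 1), (u k ω ^ 2 + b k)) := by
      refine Measurable.const_add (Finset.measurable_fun_sum _ fun k hk => ?_) _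
      have hk' : k ≤ n := Nat.lt_succ_iff.1 (Finset.mem_range.1 hk)
      exact (((hu k).mono (𝒢.mono hk') le_rfl).pow_const 2).add_const _
    exact this
  set v : ℕ → Ω → ℝ := fun k ω => u k ω / erwB u b (k + 1) ω with hv
  have hvm : ∀ k, Measurable[𝒢 k] (v k) := fun k => (hu k).div (hBm k)
  have hv1 : ∀ k ω, |v k ω| ≤ 1 := by
    intro k ω
    rw [hv]; simp only
    rw [abs_div, abs_of_pos (hBpos _ _)]
    exact div_le_one_of_le₀ ((hu1 k ω).trans (hB1 _ _)) (hBpos _ _).le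
  set N : ℕ → Ω → ℝ := fun n ω => ∑ k ∈ Finset.range n, v k ω * ξ k ω with hNdef
  have hNs : ∀ n ω, N (n + 1) ω = N n ω + v n ω * ξ n ω := by
    intro n ω; simp [hNdef, Finset.sum_range_succ]
  have hNm : ∀ n, Measurable[𝒢 n] (N n) := by
    intro n
    refine Finset.measurable_fun_sum _ fun k hk => ?_
    have hk' : k + 1 ≤ n := Finset.mem_range.1 hk
    exact ((hvm k).mono (𝒢.mono (by omega)) le_rfl).mul ((hξ k).mono (𝒢.mono hk') le_rfl)
  have hd2 : ∀ k ω, |v k ω * ξ k ω| ≤ 2 := by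
    intro k ω
    rw [abs_mul]
    nlinarith [hv1 k ω, hξ2 k ω, abs_nonneg (v k ω), abs_nonneg (ξ k ω)]
  have hNb : ∀ n ω, |N n ω| ≤ 2 * n := by
    intro n ω
    induction n with
    | zero => simp [hNdef]
    | succ n ih =>
      rw [hNs]
      have := abs_add_le (N n ω) (v n ω * ξ n ω)
      push_cast
      linarith [hd2 n ω]
  have hbddInt : ∀ (f : Ω → ℝ) (C : ℝ), Measurable f → (∀ ω, |f ω| ≤ C) → Integrable f μ := by
    intro f C hf hfC
    exact Integrable.of_bound hf.aestronglyMeasurable C (Eventually.of_forall hfC)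
  have hum0 : ∀ k, Measurable (u k) := fun k => (hu k).mono (𝒢.le k) le_rfl
  have hvm0 : ∀ k, Measurable (v k) := fun k => (hvm k).mono (𝒢.le k) le_rfl
  have hξm0 : ∀ k, Measurable (ξ k) := fun k => (hξ k).mono (𝒢.le _) le_rfl
  have hNm0 : ∀ k, Measurable (N k) := fun k => (hNm k).mono (𝒢.le k) le_rfl
  have hBm0 : ∀ n, Measurable (erwB u b n) := by
    intro n
    have : Measurable (fun ω => 1 + ∑ k ∈ Finset.range n, (u k ω ^ 2 + b k)) := by
      fun_prop
    exact this
  have hξi : ∀ k, Integrable (ξ k) μ := fun k => hbddInt _ 2 (hξm0 k) (hξ2 k)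
  have hNi : ∀ n, Integrable (N n) μ := fun n => hbddInt _ _ (hNm0 n) (hNb n)
  have hpull : ∀ (k : ℕ) (f : Ω → ℝ) (C : ℝ), Measurable[𝒢 k] f → (∀ ω, |f ω| ≤ C) →
      μ[f * ξ k | 𝒢 k] =ᵐ[μ] 0 := by
    intro k f C hf hfC
    have hfi : Integrable (f * ξ k) μ := by
      refine hbddInt _ (C * 2) ((hf.mono (𝒢.le k) le_rfl).mul (hξm0 k)) fun ω => ?_
      rw [Pi.mul_apply, abs_mul]
      exact mul_le_mul (hfC ω) (hξ2 k ω) (abs_nonneg _) ((abs_nonneg _).trans (hfC ω))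
    filter_upwards [condExp_mul_of_stronglyMeasurable_left hf.stronglyMeasurable hfi (hξi k),
      hc k] with ω h1 h2
    rw [h1, Pi.mul_apply, h2]; simp
  have hmart : Martingale N 𝒢 μ := by
    refine martingale_of_condExp_sub_eq_zero_nat (fun n => (hNm n).stronglyMeasurable) hNi ?_
    intro n
    have : N (n + 1) - N n = v n * ξ n := by
      ext ω; simp [hNs]
    rw [this]
    exact hpull n (v n) 1 (hvm n) (hv1 n)
  have hN2i : ∀ n, Integrable (fun ω => N n ω ^ 2) μ := by
    intro n
    refine hbddInt _ ((2 * n) ^ 2) ((hNm0 n).pow_const 2) fun ω => ?_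
    rw [abs_pow]
    exact pow_le_pow_left₀ (abs_nonneg _) (hNb n ω) 2
  have hBi : ∀ n, Integrable (fun ω => 4 * (erwB u b n ω)⁻¹) μ := by
    intro n
    refine hbddInt _ 4 ((hBm0 n).inv.const_mul 4) fun ω => ?_
    have h := inv_le_one_of_one_le₀ (hB1 n ω)
    have h' := inv_pos.2 (hBpos n ω)
    rw [abs_of_pos (by positivity)]
    linarith
  have hNBi : ∀ n, Integrable (fun ω => N n ω ^ 2 + 4 * (erwB u b n ω)⁻¹) μ := fun n =>
    (hN2i n).add (hBi n)
  have hL2 : ∀ n, ∫ ω, (N n ω ^ 2 + 4 * (erwB u b n ω)⁻¹) ∂μ ≤ 4 := by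
    intro n
    induction n with
    | zero => simp [hNdef, erwB]
    | succ n ih =>
      refine le_trans ?_ ih
      have hz : ∫ ω, 2 * ((N n * v n) * ξ n) ω ∂μ = 0 := by
        rw [integral_const_mul, ← integral_condExp (𝒢.le n), integral_congr_ae
          (hpull n (N n * v n) (2 * n) ((hNm n).mul (hvm n)) ?_)]
        · simp
        · intro ω
          rw [Pi.mul_apply, abs_mul]
          nlinarith [hNb n ω, hv1 n ω, abs_nonneg (N n ω), abs_nonneg (v n ω)]
      have hzi : Integrable (fun ω => 2 * ((N n * v n) * ξ n) ω) μ := by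
        refine hbddInt _ (2 * (2 * n * 2)) ?_ fun ω => ?_
        · exact (((hNm0 n).mul (hvm0 n)).mul (hξm0 n)).const_mul 2
        · simp only [Pi.mul_apply]
          rw [mul_assoc, abs_mul, abs_mul, abs_two]
          have := mul_le_mul (hNb n ω) (hd2 n ω) (abs_nonneg _) (by positivity)
          linarith
      calc ∫ ω, (N (n + 1) ω ^ 2 + 4 * (erwB u b (n + 1) ω)⁻¹) ∂μ
          ≤ ∫ ω, ((N n ω ^ 2 + 4 * (erwB u b n ω)⁻¹) + 2 * ((N n * v n) * ξ n) ω) ∂μ := by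
            refine integral_mono ((hN2i _).add (hBi _)) (((hN2i _).add (hBi _)).add hzi) ?_
            intro ω
            simp only [Pi.mul_apply, hNs]
            have hx : ξ n ω ^ 2 ≤ 4 := by
              have := abs_le.1 (hξ2 n ω); nlinarith
            have hkey : v n ω ^ 2 + (erwB u b (n + 1) ω)⁻¹ ≤ (erwB u b n ω)⁻¹ := by
              have p1 := hBpos n ω
              have p2 := hBpos (n + 1) ω
              have hs := erwB_succ u b n ω
              have hbn := hb n
              have hle : erwB u b n ω ≤ erwB u b (n + 1) ω := by nlinarith [sq_nonneg (u n ω)]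
              have e : v n ω ^ 2 + (erwB u b (n + 1) ω)⁻¹
                  = (u n ω ^ 2 + erwB u b (n + 1) ω) / erwB u b (n + 1) ω ^ 2 := by
                simp only [hv]; field_simp
              rw [e, inv_eq_one_div, div_le_div_iff₀ (by positivity) p1]
              have hw : u n ω ^ 2 ≤ erwB u b (n + 1) ω - erwB u b n ω := by linarith
              nlinarith [mul_le_mul_of_nonneg_right hw p1.le,
                sq_nonneg (erwB u b (n + 1) ω - erwB u b n ω)]
            have hm : v n ω ^ 2 * ξ n ω ^ 2 ≤ 4 * v n ω ^ 2 := by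
              nlinarith [sq_nonneg (v n ω)]
            nlinarith
        _ = ∫ ω, (N n ω ^ 2 + 4 * (erwB u b n ω)⁻¹) ∂μ := by
            rw [integral_add (hNBi n) hzi, hz, add_zero]
  have hL1 : ∀ n, eLpNorm (N n) 1 μ ≤ ((5 : ℝ≥0) : ℝ≥0∞) := by
    intro n
    rw [eLpNorm_one_eq_lintegral_enorm, ← ofReal_integral_norm_eq_lintegral_enorm (hNi n)]
    refine (ENNReal.ofReal_le_ofReal (q := 5) ?_).trans (by simp)
    calc ∫ ω, ‖N n ω‖ ∂μ ≤ ∫ ω, ((N n ω ^ 2 + 4 * (erwB u b n ω)⁻¹) + 1) ∂μ := by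
          refine integral_mono (hNi n).norm (((hN2i _).add (hBi _)).add (integrable_const _)) ?_
          intro ω
          have h' := inv_pos.2 (hBpos n ω)
          simp only [Real.norm_eq_abs]
          nlinarith [sq_abs (N n ω), sq_nonneg (|N n ω| - 1), abs_nonneg (N n ω)]
      _ ≤ 5 := by
          rw [integral_add (hNBi n) (integrable_const _)]
          have := hL2 n
          simp only [integral_const, probReal_univ, smul_eq_mul, mul_one]
          linarith
  filter_upwards [hmart.submartingale.exists_ae_tendsto_of_bdd hL1] with ω hω
  obtain ⟨c, hc⟩ := hω
  refine ⟨c, hc.congr fun n => ?_⟩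
  refine Finset.sum_congr rfl fun k _ => ?_
  simp only [hv]; ring

theorem erw_slln {m0 : MeasurableSpace Ω} (μ : Measure Ω) [IsProbabilityMeasure μ]
    (𝒢 : Filtration ℕ m0) (u ξ : ℕ → Ω → ℝ) (b : ℕ → ℝ) (hb : ∀ k, 0 ≤ b k)
    (hu : ∀ k, Measurable[𝒢 k] (u k)) (hu1 : ∀ k ω, |u k ω| ≤ 1)
    (hξ : ∀ k, Measurable[𝒢 (k + 1)] (ξ k)) (hξ2 : ∀ k ω, |ξ k ω| ≤ 2)
    (hc : ∀ k, μ[ξ k | 𝒢 k] =ᵐ[μ] 0) :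
    ∀ᵐ ω ∂μ, Tendsto (fun n => erwB u b n ω) atTop atTop →
      Tendsto (fun n => (∑ k ∈ Finset.range n, u k ω * ξ k ω) / erwB u b n ω) atTop (𝓝 0) := by
  filter_upwards [erw_mart μ 𝒢 u ξ b hb hu hu1 hξ hξ2 hc] with ω ⟨c, hc⟩ hB
  refine erw_kron _ (fun n => erwB u b n ω) c (monotone_nat_of_le_succ fun n => ?_)
    (fun n => lt_of_lt_of_le one_pos (erwB_one_le u b hb n ω)) hB hc
  rw [erwB_succ]
  nlinarith [sq_nonneg (u n ω), hb n]

/-- Strong consistency of `p̂_n`: whatever the value of `p ∈ [0,1]`,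
`p̂_n → p` almost surely. -/
theorem erw_phat_strongly_consistent
    {m0 : MeasurableSpace Ω} (μ : Measure Ω) [IsProbabilityMeasure μ]
    (ℱ : Filtration ℕ m0) (X : ℕ → Ω → ℝ) (p : ℝ)
    (hERW : IsERW μ ℱ X p) :
    ∀ᵐ ω ∂μ, Tendsto (fun n => erwPhat X n ω) atTop (𝓝 p) := by
  obtain ⟨hp0, hp1, hX, hXm, hcond⟩ := hERW
  set a : ℝ := 2 * p - 1 with ha
  have ha1 : |a| ≤ 1 := abs_le.2 ⟨by linarith, by linarith⟩
  let 𝒢 : Filtration ℕ m0 := ⟨fun k => ℱ (k + 1), fun i j h => ℱ.mono (by omega), fun i => ℱ.le _⟩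
  set u : ℕ → Ω → ℝ := fun k ω => erwS X (k + 1) ω / ((k + 1 : ℕ) : ℝ) with hudef
  set ξ : ℕ → Ω → ℝ := fun k ω => X (k + 2) ω - a * u k ω with hξdef
  have hXabs : ∀ k, 1 ≤ k → ∀ ω, |X k ω| = 1 := by
    intro k hk ω
    rcases hX k hk ω with h | h <;> simp [h]
  have hu : ∀ k, Measurable[𝒢 k] (u k) := by
    intro k
    have : Measurable[ℱ (k + 1)] (fun ω => ∑ j ∈ Finset.Icc 1 (k + 1), X j ω) := by
      refine Finset.measurable_fun_sum _ fun j hj => ?_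
      have hj' := Finset.mem_Icc.1 hj
      exact (hXm j hj'.1).mono (ℱ.mono hj'.2) le_rfl
    exact Measurable.div_const this _
  have hu1 : ∀ k ω, |u k ω| ≤ 1 := by
    intro k ω
    simp only [hudef, abs_div, Nat.abs_cast]
    refine div_le_one_of_le₀ ?_ (by positivity)
    unfold erwS
    refine (Finset.abs_sum_le_sum_abs _ _).trans ?_
    rw [Finset.sum_congr rfl fun j hj => hXabs j (Finset.mem_Icc.1 hj).1 ω]
    simp
  have hξ : ∀ k, Measurable[𝒢 (k + 1)] (ξ k) := by
    intro k
    exact (hXm (k + 2) (by omega)).sub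
      (((hu k).mono (𝒢.mono (Nat.le_succ k)) le_rfl).const_mul a)
  have hξ2 : ∀ k ω, |ξ k ω| ≤ 2 := by
    intro k ω
    have h1 := abs_sub (X (k + 2) ω) (a * u k ω)
    rw [hXabs _ (by omega), abs_mul] at h1
    have h2 := mul_le_mul ha1 (hu1 k ω) (abs_nonneg _) zero_le_one
    simp only [hξdef]
    linarith
  have hc : ∀ k, μ[ξ k | 𝒢 k] =ᵐ[μ] 0 := by
    intro k
    have hXi : Integrable (X (k + 2)) μ :=
      Integrable.of_bound ((hXm (k + 2) (by omega)).mono (ℱ.le _) le_rfl).aestronglyMeasurable 1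
        (Eventually.of_forall fun ω => (hXabs _ (by omega) ω).le)
    have hum : Measurable[𝒢 k] (fun ω => a * u k ω) := (hu k).const_mul a
    have hui : Integrable (fun ω => a * u k ω) μ := by
      refine Integrable.const_mul ?_ a
      exact Integrable.of_bound ((hu k).mono (𝒢.le _) le_rfl).aestronglyMeasurable 1
        (Eventually.of_forall fun ω => hu1 k ω)
    have e : ξ k = X (k + 2) - fun ω => a * u k ω := rfl
    have h1 := condExp_sub hXi hui (𝒢 k)
    have h2 := condExp_of_stronglyMeasurable (𝒢.le k) hum.stronglyMeasurable hui
    have h3 := hcond (k + 1) (by omega)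
    rw [e]
    filter_upwards [h1, h3] with ω g1 g3
    rw [g1, Pi.sub_apply, h2]
    have g3' : (μ[X (k + 2) | 𝒢 k]) ω = a * u k ω := g3
    rw [g3']; simp
  have hb2 : ∀ k : ℕ, (0 : ℝ) ≤ 1 / ((k : ℝ) + 1) := fun k => by positivity
  filter_upwards [erw_slln μ 𝒢 u ξ (fun _ => 0) (fun _ => le_rfl) hu hu1 hξ hξ2 hc,
    erw_slln μ 𝒢 u ξ (fun k => 1 / ((k : ℝ) + 1)) hb2 hu hu1 hξ hξ2 hc] with ω h1 h2
  have hV : Tendsto (fun n => ∑ k ∈ Finset.range n, u k ω ^ 2) atTop atTop := by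
    by_contra hcon
    rw [← not_summable_iff_tendsto_nat_atTop_of_nonneg (fun n => sq_nonneg _), not_not] at hcon
    refine erw_determ (fun k => u k ω) (fun k => X (k + 2) ω) a (∑' k, u k ω ^ 2) ha1 ?_ ?_ ?_ ?_
    · intro k
      rcases hX (k + 2) (by omega) ω with h | h <;> simp [h]
    · intro k
      have hS : erwS X (k + 1 + 1) ω = erwS X (k + 1) ω + X (k + 2) ω := by
        unfold erwS
        rw [Finset.sum_Icc_succ_top (by omega)]
      simp only [hudef, hS]
      have p1 : (k : ℝ) + 1 ≠ 0 := by positivity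
      have p2 : (k : ℝ) + 1 + 1 ≠ 0 := by positivity
      push_cast
      field_simp
      ring
    · intro n
      exact hcon.sum_le_tsum _ (fun k _ => sq_nonneg _)
    · refine h2 ?_
      refine tendsto_atTop_mono (fun n => ?_) Real.tendsto_sum_range_one_div_nat_succ_atTop
      unfold erwB
      rw [Finset.sum_add_distrib]
      have : 0 ≤ ∑ k ∈ Finset.range n, u k ω ^ 2 := Finset.sum_nonneg fun k _ => sq_nonneg _
      linarith
  have hBV : ∀ n, erwB u (fun _ => 0) n ω = 1 + ∑ k ∈ Finset.range n, u k ω ^ 2 := by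
    intro n; simp [erwB]
  simp only [hBV] at h1
  have h3 := h1 (tendsto_atTop_add_const_left _ _ hV)
  have h4 : Tendsto (fun n => (1 + ∑ k ∈ Finset.range n, u k ω ^ 2) /
      (2 * ∑ k ∈ Finset.range n, u k ω ^ 2)) atTop (𝓝 (1 / 2)) := by
    have h5 : Tendsto (fun n => (1 / 2 : ℝ) / (∑ k ∈ Finset.range n, u k ω ^ 2) + 1 / 2) atTop
        (𝓝 (0 + 1 / 2)) := (hV.const_div_atTop _).add_const _
    rw [zero_add] at h5
    refine h5.congr' ?_
    filter_upwards [hV.eventually_gt_atTop 0] with n hn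
    have := hn.ne'
    field_simp
  have h6 := ((h3.mul h4).add_const p)
  rw [zero_mul, zero_add] at h6
  rw [← tendsto_add_atTop_iff_nat 1]
  refine h6.congr' ?_
  filter_upwards [hV.eventually_gt_atTop 0] with n hn
  have hI : ∀ f : ℕ → ℝ, ∑ k ∈ Finset.Icc 1 n, f k = ∑ k ∈ Finset.range n, f (k + 1) := by
    intro f
    rw [Finset.range_eq_Ico, Finset.sum_Ico_add' f 0 n 1]
    rfl
  have hphat : erwPhat X (n + 1) ω = (∑ k ∈ Finset.range n, u k ω * (X (k + 2) ω + u k ω)) /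
      (2 * ∑ k ∈ Finset.range n, u k ω ^ 2) := by
    unfold erwPhat
    rw [Nat.add_sub_cancel, hI, hI]
  have hnum : ∑ k ∈ Finset.range n, u k ω * (X (k + 2) ω + u k ω) =
      ∑ k ∈ Finset.range n, u k ω * ξ k ω + 2 * p * ∑ k ∈ Finset.range n, u k ω ^ 2 := by
    rw [Finset.mul_sum, ← Finset.sum_add_distrib]
    refine Finset.sum_congr rfl fun k _ => ?_
    simp only [hξdef, ha]; ring
  rw [hphat, hnum]
  have p1 := hn.ne'
  have p2 : 1 + ∑ k ∈ Finset.range n, u k ω ^ 2 ≠ 0 := by linarith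
  field_simp
end
end

section
/- In the diffusive regime 0 ≤ p < 3/4, the self-normalized estimation error satisfies √(V_n)·(p̂_n − p) → N(0,1) in distribution as n → ∞, i.e., the law of √(V_n)·(p̂_n − p) converges weakly to the standard Gaussian distribution. -/
open MeasureTheory ProbabilityTheory Filter Finset
open scoped BoundedContinuousFunction ENNReal NNReal Topology

noncomputable section

variable {Ω : Type*}

/-- Bounded measurable functions with respect to a sub-sigma-algebra. -/
def BM {𝕜 : Type*} [RCLike 𝕜] (m : MeasurableSpace Ω) (f : Ω → 𝕜) : Prop :=
  Measurable[m] f ∧ ∃ C : ℝ, ∀ ω, ‖f ω‖ ≤ C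

section BMlemmas
variable {𝕜 : Type*} [RCLike 𝕜] {m : MeasurableSpace Ω}

lemma BM.const (c : 𝕜) : BM m (fun _ : Ω => c) := ⟨measurable_const, ‖c‖, fun _ => le_rfl⟩

lemma BM.add {f g : Ω → 𝕜} (hf : BM m f) (hg : BM m g) : BM m (fun ω => f ω + g ω) := by
  obtain ⟨hf, C, hC⟩ := hf
  obtain ⟨hg, D, hD⟩ := hg
  exact ⟨hf.add hg, C + D, fun ω => (norm_add_le _ _).trans (add_le_add (hC ω) (hD ω))⟩

lemma BM.mul {f g : Ω → 𝕜} (hf : BM m f) (hg : BM m g) : BM m (fun ω => f ω * g ω) := by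
  obtain ⟨hf, C, hC⟩ := hf
  obtain ⟨hg, D, hD⟩ := hg
  refine ⟨hf.mul hg, C * D, fun ω => ?_⟩
  rw [norm_mul]
  exact mul_le_mul (hC ω) (hD ω) (norm_nonneg _) ((norm_nonneg _).trans (hC ω))

lemma BM.neg {f : Ω → 𝕜} (hf : BM m f) : BM m (fun ω => - f ω) := by
  simpa using (BM.const (-1 : 𝕜)).mul hf

lemma BM.sub {f g : Ω → 𝕜} (hf : BM m f) (hg : BM m g) : BM m (fun ω => f ω - g ω) := by
  simpa [sub_eq_add_neg] using hf.add hg.neg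

lemma BM.div_const {f : Ω → 𝕜} (hf : BM m f) (c : 𝕜) : BM m (fun ω => f ω / c) := by
  simpa [div_eq_mul_inv] using hf.mul (BM.const c⁻¹)

lemma BM.pow {f : Ω → 𝕜} (hf : BM m f) (n : ℕ) : BM m (fun ω => f ω ^ n) := by
  induction n with
  | zero => simpa using BM.const (m := m) (1 : 𝕜)
  | succ n ih => simpa [pow_succ] using ih.mul hf

lemma BM.sum {f : ℕ → Ω → 𝕜} (N : ℕ) (hf : ∀ i < N, BM m (f i)) :
    BM m (fun ω => ∑ i ∈ range N, f i ω) := by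
  induction N with
  | zero => simpa using BM.const (m := m) (0 : 𝕜)
  | succ n ih =>
    simp only [sum_range_succ]
    exact (ih fun i hi => hf i (by omega)).add (hf n (by omega))

lemma BM.mono {m' : MeasurableSpace Ω} (h : m ≤ m') {f : Ω → 𝕜} (hf : BM m f) : BM m' f :=
  ⟨hf.1.mono h le_rfl, hf.2⟩

lemma BM.integrable {μ : Measure Ω} [IsFiniteMeasure μ] {f : Ω → 𝕜} (hf : BM m f) :
    Integrable f μ := by
  obtain ⟨hf, C, hC⟩ := hf
  exact Integrable.of_bound hf.aestronglyMeasurable C (ae_of_all _ hC)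

lemma BM.abs {f : Ω → ℝ} (hf : BM m f) : BM m (fun ω => |f ω|) :=
  ⟨by have := hf.1; exact this.abs, by simpa using hf.2⟩

lemma BM.ofReal {f : Ω → ℝ} (hf : BM m f) : BM m (fun ω => (f ω : ℂ)) :=
  ⟨Complex.measurable_ofReal.comp hf.1, by simpa using hf.2⟩

lemma BM.cexp {f : Ω → ℂ} (hf : BM m f) : BM m (fun ω => Complex.exp (f ω)) := by
  obtain ⟨hf, C, hC⟩ := hf
  refine ⟨Complex.measurable_exp.comp hf, Real.exp C, fun ω => ?_⟩
  rw [Complex.norm_exp]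
  exact Real.exp_le_exp.2 ((Complex.re_le_norm _).trans (hC ω))

end BMlemmas

/-- Abstract form of the elephant random walk (shifted indices): `R j = S_{j+1}/(j+1)`,
`x j = X_{j+2}`. -/
structure Walk {m0 : MeasurableSpace Ω} (μ : Measure Ω) (G : Filtration ℕ m0)
    (R x : ℕ → Ω → ℝ) (a : ℝ) : Prop where
  hR : ∀ j, Measurable[G j] (R j)
  hR1 : ∀ j ω, |R j ω| ≤ 1
  hx : ∀ j, Measurable[G (j + 1)] (x j)
  hx1 : ∀ j ω, x j ω = 1 ∨ x j ω = -1
  horth : ∀ j (W : Ω → ℝ), BM (G j) W → ∫ ω, W ω * (x j ω - a * R j ω) ∂μ = 0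
  hrec : ∀ (j : ℕ) ω, ((j : ℝ) + 2) * R (j + 1) ω = ((j : ℝ) + 1) * R j ω + x j ω
  ha : |a| ≤ 1
  ha2 : a < 1 / 2
  hR0 : ∀ ω, R 0 ω ^ 2 = 1

set_option linter.unusedSectionVars false

section WalkLemmas
variable {m0 : MeasurableSpace Ω} {μ : Measure Ω} [IsProbabilityMeasure μ] {G : Filtration ℕ m0}
  {R x : ℕ → Ω → ℝ} {a : ℝ}

lemma Walk.bR (h : Walk μ G R x a) (j : ℕ) : BM (G j) (R j) := ⟨h.hR j, 1, h.hR1 j⟩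

lemma Walk.bR' (h : Walk μ G R x a) {i j : ℕ} (hij : i ≤ j) : BM (G j) (R i) :=
  (h.bR i).mono (G.mono hij)

lemma Walk.bx (h : Walk μ G R x a) (j : ℕ) : BM (G (j + 1)) (x j) :=
  ⟨h.hx j, 1, fun ω => by rcases h.hx1 j ω with h | h <;> simp [h]⟩

lemma Walk.bxi (h : Walk μ G R x a) (j : ℕ) : BM (G (j + 1)) (fun ω => x j ω - a * R j ω) :=
  (h.bx j).sub ((BM.const a).mul (h.bR' (by omega)))

lemma Walk.bR0 (h : Walk μ G R x a) (j : ℕ) : BM m0 (R j) := (h.bR j).mono (G.le _)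
lemma Walk.bx0 (h : Walk μ G R x a) (j : ℕ) : BM m0 (x j) := (h.bx j).mono (G.le _)
lemma Walk.bxi0 (h : Walk μ G R x a) (j : ℕ) : BM m0 (fun ω => x j ω - a * R j ω) :=
  (h.bxi j).mono (G.le _)

lemma Walk.xi_le (h : Walk μ G R x a) (j : ℕ) (ω : Ω) : |x j ω - a * R j ω| ≤ 2 := by
  have h1 : |a * R j ω| ≤ 1 := by
    rw [abs_mul]
    exact mul_le_one₀ h.ha (abs_nonneg _) (h.hR1 j ω)
  have h2 := abs_le.1 h1
  rcases h.hx1 j ω with h | h <;> rw [h, abs_le] <;> constructor <;> linarith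

lemma Walk.orth_x (h : Walk μ G R x a) (j : ℕ) {W : Ω → ℝ} (hW : BM (G j) W) :
    ∫ ω, W ω * x j ω ∂μ = a * ∫ ω, W ω * R j ω ∂μ := by
  have h0 := h.horth j W hW
  have hW0 : BM m0 W := hW.mono (G.le _)
  have e : ∀ ω, W ω * (x j ω - a * R j ω) = W ω * x j ω - a * (W ω * R j ω) := fun ω => by ring
  simp_rw [e] at h0
  rw [integral_sub (hW0.mul (h.bx0 j)).integrable
    ((BM.const a).mul (hW0.mul (h.bR0 j))).integrable, integral_const_mul] at h0
  linarith

lemma Walk.orth_c (h : Walk μ G R x a) (j : ℕ) {W : Ω → ℂ} (hW : BM (G j) W) :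
    ∫ ω, W ω * ((x j ω - a * R j ω : ℝ) : ℂ) ∂μ = 0 := by
  have hW0 : BM m0 W := hW.mono (G.le _)
  have hWint : Integrable (fun ω => W ω * ((x j ω - a * R j ω : ℝ) : ℂ)) μ :=
    (hW0.mul (h.bxi0 j).ofReal).integrable
  obtain ⟨hm, C, hC⟩ := hW
  have hre : BM (G j) (fun ω => (W ω).re) :=
    ⟨Complex.measurable_re.comp hm, C, fun ω => (Complex.abs_re_le_norm _).trans (hC ω)⟩
  have him : BM (G j) (fun ω => (W ω).im) :=
    ⟨Complex.measurable_im.comp hm, C, fun ω => (Complex.abs_im_le_norm _).trans (hC ω)⟩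
  apply Complex.ext
  · have := Complex.reCLM.integral_comp_comm hWint
    simp only [Complex.reCLM_apply, Complex.re_mul_ofReal] at this
    rw [← this, h.horth j _ hre]; rfl
  · have := Complex.imCLM.integral_comp_comm hWint
    simp only [Complex.imCLM_apply, Complex.im_mul_ofReal] at this
    rw [← this, h.horth j _ him]; rfl

lemma Walk.x_sq (h : Walk μ G R x a) (j : ℕ) (ω : Ω) : x j ω ^ 2 = 1 := by
  rcases h.hx1 j ω with h | h <;> simp [h]

/-- Second moment bound. -/
lemma Walk.mom2 (h : Walk μ G R x a) :
    ∃ C : ℝ, 0 ≤ C ∧ ∀ j : ℕ, ((j : ℝ) + 1) * ∫ ω, R j ω ^ 2 ∂μ ≤ C := by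
  have hc : 0 < 1 - 2 * a := by linarith [h.ha2]
  set C : ℝ := 1 / (1 - 2 * a) + 1 with hC
  have hC1 : 1 ≤ C := by have : 0 < 1 / (1 - 2 * a) := by positivity
                         linarith
  have hCc : 1 ≤ C * (1 - 2 * a) := by
    rw [hC, add_mul, div_mul_cancel₀ _ hc.ne']; linarith
  refine ⟨C, by linarith, fun j => ?_⟩
  induction j with
  | zero => simpa [h.hR0] using hC1
  | succ j ih =>
    have hj : (0 : ℝ) < (j : ℝ) + 1 := by positivity
    have hj2 : (0 : ℝ) < (j : ℝ) + 2 := by positivity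
    have e0 : 0 ≤ ∫ ω, R j ω ^ 2 ∂μ := integral_nonneg fun ω => sq_nonneg _
    have key : ((j : ℝ) + 2) ^ 2 * ∫ ω, R (j + 1) ω ^ 2 ∂μ =
        ((j : ℝ) + 1) ^ 2 * ∫ ω, R j ω ^ 2 ∂μ + 2 * ((j : ℝ) + 1) * (a * ∫ ω, R j ω ^ 2 ∂μ)
          + 1 := by
      have o := h.orth_x j (h.bR j)
      simp_rw [← pow_two] at o
      rw [← o, ← integral_const_mul, ← integral_const_mul, ← integral_const_mul]
      have e : ∀ ω, ((j : ℝ) + 2) ^ 2 * R (j + 1) ω ^ 2 =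
          (((j : ℝ) + 1) ^ 2 * R j ω ^ 2 + 2 * ((j : ℝ) + 1) * (R j ω * x j ω)) + 1 := fun ω => by
        rw [← mul_pow, h.hrec, ← h.x_sq j ω]; ring
      simp_rw [e]
      have b1 : BM m0 (fun ω => ((j : ℝ) + 1) ^ 2 * R j ω ^ 2) := (BM.const _).mul ((h.bR0 j).pow 2)
      have b2 : BM m0 (fun ω => 2 * ((j : ℝ) + 1) * (R j ω * x j ω)) :=
        (BM.const _).mul ((h.bR0 j).mul (h.bx0 j))
      rw [integral_add (b1.add b2).integrable (integrable_const _),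
        integral_add b1.integrable b2.integrable]
      simp
    push_cast
    have h3 : ((j : ℝ) + 2) * (((j : ℝ) + 1 + 1) * ∫ ω, R (j + 1) ω ^ 2 ∂μ) ≤
        ((j : ℝ) + 2) * C := by
      rw [show ((j : ℝ) + 2) * (((j : ℝ) + 1 + 1) * ∫ ω, R (j + 1) ω ^ 2 ∂μ) =
        ((j : ℝ) + 2) ^ 2 * ∫ ω, R (j + 1) ω ^ 2 ∂μ by ring, key]
      set e := ∫ ω, R j ω ^ 2 ∂μ
      rcases le_or_gt 0 ((j : ℝ) + 1 + 2 * a) with hs | hs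
      · have := mul_le_mul_of_nonneg_right ih hs
        nlinarith
      · have : ((j : ℝ) + 1) * e * ((j : ℝ) + 1 + 2 * a) ≤ 0 :=
          mul_nonpos_of_nonneg_of_nonpos (by positivity) hs.le
        nlinarith
    exact le_of_mul_le_mul_left h3 hj2

/-- Fourth moment bound. -/
lemma Walk.mom4 (h : Walk μ G R x a) :
    ∃ C : ℝ, 0 ≤ C ∧ ∀ j : ℕ, ((j : ℝ) + 1) ^ 2 * ∫ ω, R j ω ^ 4 ∂μ ≤ C := by
  obtain ⟨C, hC0, hC⟩ := h.mom2
  have hc : 0 < 1 - 2 * a := by linarith [h.ha2]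
  set B : ℝ := 10 * C + 1 with hB
  have hB1 : 1 ≤ B := by linarith
  set D : ℝ := B / (2 * (1 - 2 * a)) + B with hD
  have hDB : B ≤ D := by
    have : 0 < B / (2 * (1 - 2 * a)) := by positivity
    linarith
  have hDc : B ≤ D * (2 * (1 - 2 * a)) := by
    rw [hD, add_mul, div_mul_cancel₀ _ (by positivity)]
    have : 0 ≤ B * (2 * (1 - 2 * a)) := by positivity
    linarith
  refine ⟨D, by linarith, fun j => ?_⟩
  induction j with
  | zero =>
    have : ∀ ω, R 0 ω ^ 4 = 1 := fun ω => by
      rw [show (4 : ℕ) = 2 * 2 by norm_num, pow_mul, h.hR0]; norm_num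
    simp only [this]; simp; linarith
  | succ j ih =>
    have hj : (0 : ℝ) < (j : ℝ) + 1 := by positivity
    have hj1 : (1 : ℝ) ≤ (j : ℝ) + 1 := by have : (0:ℝ) ≤ j := by positivity
                                           linarith
    have hj2 : (0 : ℝ) < (j : ℝ) + 2 := by positivity
    have e0 : 0 ≤ ∫ ω, R j ω ^ 2 ∂μ := integral_nonneg fun ω => sq_nonneg _
    have f0 : 0 ≤ ∫ ω, R j ω ^ 4 ∂μ := integral_nonneg fun ω => by positivity
    have hCj := hC j
    have key : ((j : ℝ) + 2) ^ 4 * ∫ ω, R (j + 1) ω ^ 4 ∂μ =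
        ((j : ℝ) + 1) ^ 4 * ∫ ω, R j ω ^ 4 ∂μ
          + 4 * ((j : ℝ) + 1) ^ 3 * (a * ∫ ω, R j ω ^ 4 ∂μ)
          + 6 * ((j : ℝ) + 1) ^ 2 * ∫ ω, R j ω ^ 2 ∂μ
          + 4 * ((j : ℝ) + 1) * (a * ∫ ω, R j ω ^ 2 ∂μ) + 1 := by
      have o := h.orth_x j (h.bR j)
      have o3 := h.orth_x j ((h.bR j).pow 3)
      simp_rw [← pow_two] at o
      simp_rw [← pow_succ] at o3
      norm_num at o3
      rw [← o, ← o3]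
      simp_rw [← integral_const_mul]
      have e : ∀ ω, ((j : ℝ) + 2) ^ 4 * R (j + 1) ω ^ 4 =
          (((((j : ℝ) + 1) ^ 4 * R j ω ^ 4 + 4 * ((j : ℝ) + 1) ^ 3 * (R j ω ^ 3 * x j ω))
            + 6 * ((j : ℝ) + 1) ^ 2 * R j ω ^ 2) + 4 * ((j : ℝ) + 1) * (R j ω * x j ω)) + 1 :=
        fun ω => by
        have h1 := h.x_sq j ω
        have h3 : x j ω ^ 3 = x j ω := by rw [pow_succ, h1, one_mul]
        have h4 : x j ω ^ 4 = 1 := by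
          rw [show (4 : ℕ) = 2 * 2 by norm_num, pow_mul, h1]; norm_num
        rw [← mul_pow, h.hrec]
        linear_combination 6 * ((j : ℝ) + 1) ^ 2 * R j ω ^ 2 * h1
          + 4 * ((j : ℝ) + 1) * R j ω * h3 + h4
      simp_rw [e]
      have b1 : BM m0 (fun ω => ((j : ℝ) + 1) ^ 4 * R j ω ^ 4) := (BM.const _).mul ((h.bR0 j).pow 4)
      have b2 : BM m0 (fun ω => 4 * ((j : ℝ) + 1) ^ 3 * (R j ω ^ 3 * x j ω)) :=
        (BM.const _).mul (((h.bR0 j).pow 3).mul (h.bx0 j))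
      have b3 : BM m0 (fun ω => 6 * ((j : ℝ) + 1) ^ 2 * R j ω ^ 2) :=
        (BM.const _).mul ((h.bR0 j).pow 2)
      have b4 : BM m0 (fun ω => 4 * ((j : ℝ) + 1) * (R j ω * x j ω)) :=
        (BM.const _).mul ((h.bR0 j).mul (h.bx0 j))
      rw [integral_add (((b1.add b2).add b3).add b4).integrable (integrable_const _),
        integral_add ((b1.add b2).add b3).integrable b4.integrable,
        integral_add (b1.add b2).integrable b3.integrable,
        integral_add b1.integrable b2.integrable]
      simp
    push_cast
    have h3 : ((j : ℝ) + 2) ^ 2 * (((j : ℝ) + 1 + 1) ^ 2 * ∫ ω, R (j + 1) ω ^ 4 ∂μ) ≤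
        ((j : ℝ) + 2) ^ 2 * D := by
      rw [show ((j : ℝ) + 2) ^ 2 * (((j : ℝ) + 1 + 1) ^ 2 * ∫ ω, R (j + 1) ω ^ 4 ∂μ) =
        ((j : ℝ) + 2) ^ 4 * ∫ ω, R (j + 1) ω ^ 4 ∂μ by ring, key]
      set e := ∫ ω, R j ω ^ 2 ∂μ
      set f := ∫ ω, R j ω ^ 4 ∂μ
      set k : ℝ := (j : ℝ) + 1 with hk
      have hk2 : (j : ℝ) + 2 = k + 1 := by rw [hk]; ring
      rw [hk2]
      have hke : 0 ≤ k * e := by positivity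
      have ha1 := (abs_le.1 h.ha).2
      have r1 : 6 * k ^ 2 * e + 4 * k * (a * e) + 1 ≤ B * k := by
        have i1 : k * (k * e) ≤ k * C := mul_le_mul_of_nonneg_left hCj hj.le
        have i2 : a * (k * e) ≤ k * C := by nlinarith
        rw [hB]; nlinarith
      have r2 : k ^ 4 * f + 4 * k ^ 3 * (a * f) = (k ^ 2 * f) * (k * (k + 4 * a)) := by ring
      rcases le_or_gt 0 (k + 4 * a) with hs | hs
      · have i3 := mul_le_mul_of_nonneg_right ih (mul_nonneg hj.le hs)
        have i4 := mul_le_mul_of_nonneg_left hDc hj.le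
        nlinarith
      · have i3 : (k ^ 2 * f) * (k * (k + 4 * a)) ≤ 0 :=
          mul_nonpos_of_nonneg_of_nonpos (by positivity)
            (mul_nonpos_of_nonneg_of_nonpos hj.le hs.le)
        have i4 := mul_le_mul_of_nonneg_left hDB hj.le
        nlinarith
    exact le_of_mul_le_mul_left h3 (by positivity)

/-- Harmonic sums. -/
def hsum (N : ℕ) : ℝ := ∑ j ∈ range N, 1 / ((j : ℝ) + 1)

lemma hsum_ge_one {N : ℕ} (hN : 1 ≤ N) : 1 ≤ hsum N := by
  have : ∑ j ∈ range 1, 1 / ((j : ℝ) + 1) ≤ hsum N :=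
    sum_le_sum_of_subset_of_nonneg (range_subset_range.2 hN) fun i _ _ => by positivity
  simpa using this

lemma hsum_tendsto : Tendsto hsum atTop atTop := by
  have := Real.tendsto_sum_range_one_div_nat_succ_atTop
  exact this

lemma telesum (N : ℕ) : ∑ j ∈ range N, 1 / (((j : ℝ) + 1) * ((j : ℝ) + 2)) ≤ 1 := by
  have : ∑ j ∈ range N, 1 / (((j : ℝ) + 1) * ((j : ℝ) + 2)) = 1 - 1 / ((N : ℝ) + 1) := by
    induction N with
    | zero => simp
    | succ n ih =>
      rw [sum_range_succ, ih]
      push_cast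
      field_simp
      ring
  rw [this]
  have : 0 ≤ 1 / ((N : ℝ) + 1) := by positivity
  linarith

/-- `U_N = ∑_{j<N} R_j²`. -/
def Usum (R : ℕ → Ω → ℝ) (N : ℕ) (ω : Ω) : ℝ := ∑ j ∈ range N, R j ω ^ 2

lemma Walk.bU (h : Walk μ G R x a) (N : ℕ) : BM m0 (Usum R N) :=
  BM.sum N fun i _ => (h.bR0 i).pow 2

/-- Martingale remainder increments. -/
def etaf (R x : ℕ → Ω → ℝ) (a : ℝ) (j : ℕ) (ω : Ω) : ℝ :=
  (2 * ((j : ℝ) + 1) / ((j : ℝ) + 2) * R j ω) * (x j ω - a * R j ω)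

lemma Walk.beta (h : Walk μ G R x a) (j : ℕ) : BM (G (j + 1)) (etaf R x a j) :=
  ((BM.const _).mul (h.bR' (by omega))).mul (h.bxi j)

lemma Walk.beta0 (h : Walk μ G R x a) (j : ℕ) : BM m0 (etaf R x a j) :=
  (h.beta j).mono (G.le _)

lemma Walk.ident (h : Walk μ G R x a) (N : ℕ) (ω : Ω) :
    (1 - 2 * a) * Usum R N ω - hsum N = 1 - ((N : ℝ) + 1) * R N ω ^ 2
      + ∑ j ∈ range N, ((1 - 2 * a) * R j ω ^ 2 / ((j : ℝ) + 2)
          - 1 / (((j : ℝ) + 1) * ((j : ℝ) + 2)))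
      + ∑ j ∈ range N, etaf R x a j ω := by
  induction N with
  | zero => simp [Usum, hsum, h.hR0]
  | succ N ih =>
    have e1 : Usum R (N + 1) ω = Usum R N ω + R N ω ^ 2 := by simp [Usum, sum_range_succ]
    have e2 : hsum (N + 1) = hsum N + 1 / ((N : ℝ) + 1) := by simp [hsum, sum_range_succ]
    rw [e1, e2, sum_range_succ, sum_range_succ]
    have h1 := h.hrec N ω
    have h2 := h.x_sq N ω
    have e3 : R (N + 1) ω = (((N : ℝ) + 1) * R N ω + x N ω) / ((N : ℝ) + 2) := by
      rw [← h1]; field_simp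
    have e4 : ((N : ℝ) + 1 + 1) * R (N + 1) ω ^ 2 =
        (((N : ℝ) + 1) ^ 2 * R N ω ^ 2 + 2 * ((N : ℝ) + 1) * R N ω * x N ω + 1)
          / ((N : ℝ) + 2) := by
      have num : (((N : ℝ) + 1) * R N ω + x N ω) ^ 2 =
          ((N : ℝ) + 1) ^ 2 * R N ω ^ 2 + 2 * ((N : ℝ) + 1) * R N ω * x N ω + 1 := by
        linear_combination h2
      rw [e3, ← num]; field_simp; ring
    push_cast
    rw [e4, etaf]
    have e5 : 1 / ((N : ℝ) + 1) = 1 / (((N : ℝ) + 1) * ((N : ℝ) + 2)) + 1 / ((N : ℝ) + 2) := by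
      field_simp; ring
    have e6 : (((N : ℝ) + 1) ^ 2 * R N ω ^ 2 + 2 * ((N : ℝ) + 1) * R N ω * x N ω + 1)
          / ((N : ℝ) + 2) = ((N : ℝ) + 1) * R N ω ^ 2 - (1 - 2 * a) * R N ω ^ 2
          + (1 - 2 * a) * R N ω ^ 2 / ((N : ℝ) + 2) + 1 / ((N : ℝ) + 2)
          + (2 * ((N : ℝ) + 1) / ((N : ℝ) + 2) * R N ω) * (x N ω - a * R N ω) := by
      field_simp; ring
    rw [e5, e6]
    linarith

lemma Walk.eta_sq (h : Walk μ G R x a) {C : ℝ}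
    (hC : ∀ j : ℕ, ((j : ℝ) + 1) * ∫ ω, R j ω ^ 2 ∂μ ≤ C) (N : ℕ) :
    ∫ ω, (∑ j ∈ range N, etaf R x a j ω) ^ 2 ∂μ ≤ 16 * C * hsum N := by
  induction N with
  | zero => simp [hsum]
  | succ N ih =>
    have e2 : hsum (N + 1) = hsum N + 1 / ((N : ℝ) + 1) := by simp [hsum, sum_range_succ]
    have bM : BM (G N) (fun ω => ∑ j ∈ range N, etaf R x a j ω) :=
      BM.sum N fun i hi => (h.beta i).mono (G.mono (by omega))
    have bM0 := bM.mono (G.le N)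
    have o := h.horth N _ ((bM.mul ((BM.const (2 * ((N : ℝ) + 1) / ((N : ℝ) + 2))).mul (h.bR N))))
    have b1 := bM0.pow 2
    have b2 := (BM.const (2 : ℝ)).mul (bM0.mul (h.beta0 N))
    have b3 := (h.beta0 N).pow 2
    have o' : ∫ ω, 2 * ((∑ j ∈ range N, etaf R x a j ω) * etaf R x a N ω) ∂μ = 0 := by
      rw [integral_const_mul]
      have : ∫ ω, (∑ j ∈ range N, etaf R x a j ω) * etaf R x a N ω ∂μ = 0 := by
        rw [← o]; congr 1; ext ω; rw [etaf]; ring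
      rw [this, mul_zero]
    have e : ∀ ω, (∑ j ∈ range (N + 1), etaf R x a j ω) ^ 2 =
        ((∑ j ∈ range N, etaf R x a j ω) ^ 2
          + 2 * ((∑ j ∈ range N, etaf R x a j ω) * etaf R x a N ω)) + etaf R x a N ω ^ 2 :=
      fun ω => by rw [sum_range_succ]; ring
    simp_rw [e]
    rw [integral_add (b1.add b2).integrable b3.integrable,
      integral_add b1.integrable b2.integrable, o', e2]
    have i3 : ∫ ω, etaf R x a N ω ^ 2 ∂μ ≤ ∫ ω, 16 * R N ω ^ 2 ∂μ := by
      refine integral_mono b3.integrable ((BM.const 16).mul ((h.bR0 N).pow 2)).integrable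
        fun ω => ?_
      have j1 : (x N ω - a * R N ω) ^ 2 ≤ 4 := by
        have := sq_le_sq' (abs_le.1 (h.xi_le N ω)).1 (abs_le.1 (h.xi_le N ω)).2
        linarith
      have j2 : (2 * ((N : ℝ) + 1) / ((N : ℝ) + 2)) ^ 2 ≤ 4 := by
        have k1 : 2 * ((N : ℝ) + 1) / ((N : ℝ) + 2) ≤ 2 := by
          rw [div_le_iff₀ (by positivity)]; linarith
        have k0 : 0 ≤ 2 * ((N : ℝ) + 1) / ((N : ℝ) + 2) := by positivity
        nlinarith
      simp only [etaf]
      rw [mul_pow, mul_pow]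
      have := mul_le_mul j2 j1 (sq_nonneg _) (by norm_num)
      nlinarith [mul_le_mul_of_nonneg_right this (sq_nonneg (R N ω))]
    rw [integral_const_mul] at i3
    have i4 : ∫ ω, R N ω ^ 2 ∂μ ≤ C * (1 / ((N : ℝ) + 1)) := by
      rw [mul_one_div, le_div_iff₀ (by positivity), mul_comm]; exact hC N
    linarith

lemma Walk.lln (h : Walk μ G R x a) : ∃ K : ℝ, ∀ N, 1 ≤ N →
    ∫ ω, |Usum R N ω / (hsum N / (1 - 2 * a)) - 1| ∂μ ≤ K / √(hsum N) := by
  obtain ⟨C, hC0, hC⟩ := h.mom2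
  have hc : 0 < 1 - 2 * a := by linarith [h.ha2]
  set c := 1 - 2 * a with hcdef
  refine ⟨(1 + C + (c * C + 1)) + (8 * C + 1), fun N hN => ?_⟩
  have hH := hsum_ge_one hN
  have hH0 : 0 < hsum N := by linarith
  set s := √(hsum N) with hs
  have hs1 : 1 ≤ s := by rw [hs]; exact Real.one_le_sqrt.2 hH
  have hss : s * s = hsum N := Real.mul_self_sqrt hH0.le
  have bM : BM m0 (fun ω => ∑ j ∈ range N, etaf R x a j ω) := BM.sum N fun i _ => h.beta0 i
  have bT : BM m0 (fun ω => ((N : ℝ) + 1) * R N ω ^ 2) := (BM.const _).mul ((h.bR0 N).pow 2)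
  have bE : BM m0 (fun ω => ∑ j ∈ range N, (c * R j ω ^ 2 / ((j : ℝ) + 2)
          + 1 / (((j : ℝ) + 1) * ((j : ℝ) + 2)))) :=
    BM.sum N fun i _ => (((BM.const c).mul ((h.bR0 i).pow 2)).div_const _).add (BM.const _)
  have bN : BM m0 (fun ω => (∑ j ∈ range N, etaf R x a j ω) ^ 2 / (2 * s) + s / 2) :=
    ((bM.pow 2).div_const _).add (BM.const _)
  have b1 : BM m0 (fun ω => 1 + ((N : ℝ) + 1) * R N ω ^ 2) := (BM.const _).add bT
  have pw : ∀ ω, |c * Usum R N ω - hsum N| ≤ ((1 + ((N : ℝ) + 1) * R N ω ^ 2)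
      + ∑ j ∈ range N, (c * R j ω ^ 2 / ((j : ℝ) + 2)
          + 1 / (((j : ℝ) + 1) * ((j : ℝ) + 2))))
      + ((∑ j ∈ range N, etaf R x a j ω) ^ 2 / (2 * s) + s / 2) := by
    intro ω
    rw [hcdef, h.ident N ω, ← hcdef]
    refine (abs_add_le _ _).trans (add_le_add ((abs_add_le _ _).trans (add_le_add ?_ ?_)) ?_)
    · have : 0 ≤ ((N : ℝ) + 1) * R N ω ^ 2 := by positivity
      rw [abs_le]; constructor <;> linarith
    · refine (abs_sum_le_sum_abs _ _).trans (sum_le_sum fun j _ => ?_)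
      have p1 : 0 ≤ c * R j ω ^ 2 / ((j : ℝ) + 2) := by positivity
      have p2 : 0 ≤ 1 / (((j : ℝ) + 1) * ((j : ℝ) + 2)) := by positivity
      rw [abs_le]; constructor <;> linarith
    · set y := ∑ j ∈ range N, etaf R x a j ω
      have : y ^ 2 / (2 * s) + s / 2 = (y ^ 2 + s ^ 2) / (2 * s) := by field_simp
      rw [this, le_div_iff₀ (by positivity)]
      nlinarith [sq_nonneg (|y| - s), sq_abs y]
  have main : ∫ ω, |c * Usum R N ω - hsum N| ∂μ ≤ (1 + C + (c * C + 1)) + (8 * C + 1) * s := by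
    refine (integral_mono (((BM.const c).mul (h.bU N)).sub (BM.const _)).abs.integrable
      ((b1.add bE).add bN).integrable pw).trans ?_
    rw [integral_add (b1.add bE).integrable bN.integrable,
      integral_add b1.integrable bE.integrable]
    refine add_le_add (add_le_add ?_ ?_) ?_
    · rw [integral_add (integrable_const _) bT.integrable, integral_const_mul]
      simpa using hC N
    · rw [integral_finsetSum _ fun i _ => ((((BM.const c).mul
        ((h.bR0 i).pow 2)).div_const _).add (BM.const _)).integrable]
      calc _ ≤ ∑ j ∈ range N, (c * C + 1) * (1 / (((j : ℝ) + 1) * ((j : ℝ) + 2))) := by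
            refine sum_le_sum fun j _ => ?_
            rw [integral_add (((BM.const c).mul ((h.bR0 j).pow 2)).div_const _).integrable
              (integrable_const _), integral_div, integral_const_mul]
            simp only [integral_const, probReal_univ, one_smul]
            rw [add_mul (c * C), one_mul]
            have i1 : ∫ ω, R j ω ^ 2 ∂μ ≤ C / ((j : ℝ) + 1) := by
              rw [le_div_iff₀ (by positivity), mul_comm]; exact hC j
            have i2 : c * (∫ ω, R j ω ^ 2 ∂μ) / ((j : ℝ) + 2)
                ≤ c * (C / ((j : ℝ) + 1)) / ((j : ℝ) + 2) := by gcongr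
            have i3 : c * (C / ((j : ℝ) + 1)) / ((j : ℝ) + 2)
                = c * C * (1 / (((j : ℝ) + 1) * ((j : ℝ) + 2))) := by field_simp
            linarith
        _ ≤ _ := by
            rw [← mul_sum]
            exact mul_le_of_le_one_right (by positivity) (telesum N)
    · rw [integral_add ((bM.pow 2).div_const _).integrable (integrable_const _), integral_div]
      have := h.eta_sq hC N
      have i1 : (∫ ω, (∑ j ∈ range N, etaf R x a j ω) ^ 2 ∂μ) / (2 * s) ≤ 8 * C * s := by
        rw [div_le_iff₀ (by positivity)]
        rw [← hss] at this
        linarith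
      simp only [integral_const, probReal_univ, one_smul]
      linarith
  have e : ∀ ω, |Usum R N ω / (hsum N / c) - 1| = |c * Usum R N ω - hsum N| / hsum N := by
    intro ω
    rw [← abs_of_pos hH0, ← abs_div, abs_of_pos hH0]
    congr 1
    field_simp
  simp_rw [e]
  rw [integral_div, div_le_div_iff₀ hH0 (by positivity)]
  have := mul_le_mul_of_nonneg_right main (by positivity : 0 ≤ s)
  refine this.trans ?_
  rw [← hss]
  have q : 0 ≤ 1 + C + (c * C + 1) := by positivity
  nlinarith [mul_le_mul_of_nonneg_left hs1 (mul_nonneg q (by positivity : 0 ≤ s))]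

/-- Constant in the Taylor estimate. -/
def Kt (t : ℝ) : ℝ :=
  Real.exp (t ^ 2) * (t ^ 2 + 8 * |t| ^ 3 * Real.exp (2 * |t|) + t ^ 4 * Real.exp (t ^ 2))

lemma Kt_nonneg (t : ℝ) : 0 ≤ Kt t := by unfold Kt; positivity

lemma taylor_est {t a' R' x' r s : ℝ} (hs : 1 ≤ s) (hr : |r| ≤ 1 / s)
    (ha' : |a'| ≤ 1) (hx' : x' ^ 2 = 1) (hxi : |x' - a' * R'| ≤ 2) :
    ‖Complex.exp ((t ^ 2 / 2 * r ^ 2 : ℝ) : ℂ) * Complex.exp (((t * (r * (x' - a' * R')) : ℝ) : ℂ)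
        * Complex.I) - 1
      - (Complex.exp ((t ^ 2 / 2 * r ^ 2 : ℝ) : ℂ) * (((t * r : ℝ) : ℂ) * Complex.I
          + ((t ^ 2 * r ^ 2 * a' * R' : ℝ) : ℂ))) * ((x' - a' * R' : ℝ) : ℂ)‖
      ≤ Kt t * (r ^ 2 * R' ^ 2 + r ^ 2 / s) := by
  set ξ := x' - a' * R' with hξ
  set y := t * (r * ξ) with hy
  set u := t ^ 2 / 2 * r ^ 2 with hu
  have hs0 : 0 < s := by linarith
  have hs1 : 1 / s ≤ 1 := by rw [div_le_one hs0]; exact hs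
  have hr1 : |r| ≤ 1 := hr.trans hs1
  have hr2 : r ^ 2 ≤ 1 := by rw [← sq_abs]; exact pow_le_one₀ (abs_nonneg _) hr1
  have hr3 : |r| ^ 3 ≤ r ^ 2 / s := by
    rw [pow_succ, sq_abs, ← mul_one_div]
    exact mul_le_mul_of_nonneg_left hr (sq_nonneg _)
  have hr4 : r ^ 4 ≤ r ^ 2 / s := by
    refine le_trans ?_ hr3
    rw [show r ^ 4 = |r| ^ 3 * |r| by
      rw [← pow_succ]; exact (Even.pow_abs (by decide) r).symm]
    exact mul_le_of_le_one_right (by positivity) hr1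
  have hu0 : 0 ≤ u := by positivity
  have hut : u ≤ t ^ 2 := by
    have : t ^ 2 * r ^ 2 ≤ t ^ 2 := mul_le_of_le_one_right (sq_nonneg _) hr2
    rw [hu]; nlinarith [sq_nonneg t]
  have hyle : |y| ≤ 2 * |t| * |r| := by
    rw [hy, abs_mul, abs_mul]
    have := mul_le_mul_of_nonneg_left hxi (mul_nonneg (abs_nonneg t) (abs_nonneg r))
    linarith
  have hyt : |y| ≤ 2 * |t| := hyle.trans (mul_le_of_le_one_right (by positivity) hr1)
  have T1 := Complex.norm_exp_sub_sum_le_norm_mul_exp ((y : ℂ) * Complex.I) 3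
  have T2 := Complex.norm_exp_sub_sum_le_norm_mul_exp (((-u : ℝ) : ℂ)) 2
  simp only [sum_range_succ, sum_range_zero] at T1 T2
  norm_num [Nat.factorial] at T1 T2
  have hys : y ^ 2 / 2 = u - t ^ 2 * r ^ 2 * a' * R' * ξ - t ^ 2 * r ^ 2 * a' ^ 2 * R' ^ 2 / 2 := by
    rw [hy, hu, hξ]; linear_combination t ^ 2 * r ^ 2 / 2 * hx'
  have hysC : (y : ℂ) ^ 2 / 2 = u - t ^ 2 * r ^ 2 * a' * R' * ξ
      - t ^ 2 * r ^ 2 * a' ^ 2 * R' ^ 2 / 2 := by exact_mod_cast congrArg (fun z : ℝ => (z : ℂ)) hys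
  have hyC : (y : ℂ) = t * (r * ξ) := by rw [hy]; push_cast; ring
  have hexp : Complex.exp (u : ℂ) * Complex.exp (-(u : ℂ)) = 1 := by
    rw [← Complex.exp_add]; simp
  have decomp : Complex.exp (u : ℂ) * Complex.exp ((y : ℂ) * Complex.I) - 1
      - (Complex.exp (u : ℂ) * (((t * r : ℝ) : ℂ) * Complex.I
          + ((t ^ 2 * r ^ 2 * a' * R' : ℝ) : ℂ))) * (ξ : ℂ)
      = Complex.exp (u : ℂ) * (((t ^ 2 * r ^ 2 * a' ^ 2 * R' ^ 2 / 2 : ℝ) : ℂ)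
        + (Complex.exp ((y : ℂ) * Complex.I) - (1 + (y : ℂ) * Complex.I
            + ((y : ℂ) * Complex.I) ^ 2 / 2))
        - (Complex.exp (-(u : ℂ)) - (1 + -(u : ℂ)))) := by
    rw [mul_pow, Complex.I_sq]
    push_cast
    linear_combination hexp - Complex.exp (u : ℂ) * hysC + Complex.exp (u : ℂ) * Complex.I * hyC
  rw [decomp, norm_mul, Complex.norm_exp, Complex.ofReal_re, Kt, mul_assoc (Real.exp (t ^ 2))]
  refine mul_le_mul (Real.exp_le_exp.2 hut) ?_ (norm_nonneg _) (Real.exp_pos _).le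
  refine (norm_sub_le _ _).trans ((add_le_add (norm_add_le _ _) le_rfl).trans ?_)
  have N1 : ‖((t ^ 2 * r ^ 2 * a' ^ 2 * R' ^ 2 / 2 : ℝ) : ℂ)‖ ≤ t ^ 2 * (r ^ 2 * R' ^ 2) := by
    rw [Complex.norm_real, Real.norm_of_nonneg (by positivity)]
    have : a' ^ 2 ≤ 1 := by rw [← sq_abs]; exact pow_le_one₀ (abs_nonneg _) ha'
    have h2 : 0 ≤ t ^ 2 * r ^ 2 * R' ^ 2 := by positivity
    nlinarith
  have N2 : |y| ^ 3 * Real.exp |y| ≤ 8 * |t| ^ 3 * Real.exp (2 * |t|) * (r ^ 2 / s) := by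
    calc |y| ^ 3 * Real.exp |y| ≤ (2 * |t| * |r|) ^ 3 * Real.exp (2 * |t|) := by gcongr
      _ = 8 * |t| ^ 3 * Real.exp (2 * |t|) * |r| ^ 3 := by ring
      _ ≤ _ := by gcongr
  have N3 : |u| ^ 2 * Real.exp |u| ≤ t ^ 4 * Real.exp (t ^ 2) * (r ^ 2 / s) := by
    rw [abs_of_nonneg hu0]
    calc u ^ 2 * Real.exp u ≤ u ^ 2 * Real.exp (t ^ 2) := by gcongr
      _ = t ^ 4 * Real.exp (t ^ 2) * (r ^ 4 / 4) := by rw [hu]; ring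
      _ ≤ _ := by
        have : 0 ≤ r ^ 4 := by positivity
        exact mul_le_mul_of_nonneg_left (by linarith) (by positivity)
  have T1' := T1.trans (by simpa using N2)
  have T2' := T2.trans (by simpa using N3)
  have p1 : 0 ≤ r ^ 2 / s := by positivity
  have p2 : 0 ≤ r ^ 2 * R' ^ 2 := by positivity
  have q1 : 0 ≤ t ^ 2 * (r ^ 2 / s) := by positivity
  have q2 : 0 ≤ 8 * |t| ^ 3 * Real.exp (2 * |t|) * (r ^ 2 * R' ^ 2) := by positivity
  have q3 : 0 ≤ t ^ 4 * Real.exp (t ^ 2) * (r ^ 2 * R' ^ 2) := by positivity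
  refine (add_le_add (add_le_add N1 T1') T2').trans ?_
  linarith

open Classical in
/-- Truncated and normalized predictable weights. -/
def trw (R : ℕ → Ω → ℝ) (L : ℝ) (j : ℕ) (ω : Ω) : ℝ :=
  if Usum R (j + 1) ω ≤ 2 * L then R j ω / √L else 0

lemma Walk.br (h : Walk μ G R x a) (L : ℝ) (j : ℕ) : BM (G j) (trw R L j) := by
  have hU : Measurable[G j] (Usum R (j + 1)) :=
    (BM.sum (j + 1) fun i hi => (h.bR' (by omega : i ≤ j)).pow 2).1
  refine ⟨Measurable.ite (measurableSet_le hU measurable_const) ((h.hR j).div_const _)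
    measurable_const, |1 / √L|, fun ω => ?_⟩
  unfold trw
  split_ifs
  · rw [Real.norm_eq_abs, abs_div, abs_div, abs_one]
    gcongr
    exact h.hR1 j ω
  · simp

lemma Walk.r_le (h : Walk μ G R x a) (L : ℝ) (j : ℕ) (ω : Ω) : |trw R L j ω| ≤ 1 / √L := by
  unfold trw
  split_ifs
  · rw [abs_div, abs_of_nonneg (Real.sqrt_nonneg L)]
    gcongr
    exact h.hR1 j ω
  · simp

lemma r_sq_le {L : ℝ} (hL : 0 < L) (j : ℕ) (ω : Ω) : trw R L j ω ^ 2 ≤ R j ω ^ 2 / L := by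
  unfold trw
  split_ifs
  · rw [div_pow, Real.sq_sqrt hL.le]
  · simp; positivity

lemma Usum_mono (ω : Ω) {i j : ℕ} (hij : i ≤ j) : Usum R i ω ≤ Usum R j ω :=
  sum_le_sum_of_subset_of_nonneg (range_subset_range.2 hij) fun _ _ _ => sq_nonneg _

lemma r_eq {L : ℝ} {N : ℕ} {ω : Ω} (hU : Usum R N ω ≤ 2 * L) {j : ℕ} (hj : j < N) :
    trw R L j ω = R j ω / √L := by
  unfold trw
  rw [if_pos ((Usum_mono ω hj).trans hU)]

lemma Q_le {L : ℝ} (hL : 0 < L) (N : ℕ) (ω : Ω) : ∑ j ∈ range N, trw R L j ω ^ 2 ≤ 2 := by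
  induction N with
  | zero => simp
  | succ N ih =>
    by_cases hU : Usum R (N + 1) ω ≤ 2 * L
    · calc _ ≤ ∑ j ∈ range (N + 1), R j ω ^ 2 / L := sum_le_sum fun j _ => r_sq_le hL j ω
        _ = Usum R (N + 1) ω / L := by rw [← sum_div]; rfl
        _ ≤ 2 := by rw [div_le_iff₀ hL]; exact hU
    · rw [sum_range_succ]
      have : trw R L N ω = 0 := by unfold trw; rw [if_neg hU]
      rw [this]; simpa using ih

lemma Q_sub {L : ℝ} (hL : 0 < L) (N : ℕ) (ω : Ω) :
    |∑ j ∈ range N, trw R L j ω ^ 2 - 1| ≤ |Usum R N ω / L - 1| := by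
  by_cases hU : Usum R N ω ≤ 2 * L
  · have : ∑ j ∈ range N, trw R L j ω ^ 2 = Usum R N ω / L := by
      rw [Usum, sum_div]
      refine sum_congr rfl fun j hj => ?_
      rw [r_eq hU (mem_range.1 hj), div_pow, Real.sq_sqrt hL.le]
    rw [this]
  · have h1 := Q_le (R := R) hL N ω
    have h0 : 0 ≤ ∑ j ∈ range N, trw R L j ω ^ 2 := sum_nonneg fun _ _ => sq_nonneg _
    have h2 : 2 < Usum R N ω / L := by rw [lt_div_iff₀ hL]; linarith
    calc _ ≤ 1 := by rw [abs_le]; constructor <;> linarith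
      _ ≤ Usum R N ω / L - 1 := by linarith
      _ ≤ _ := le_abs_self _

/-- Truncated normalized martingale. -/
def Mt (R x : ℕ → Ω → ℝ) (a L : ℝ) (N : ℕ) (ω : Ω) : ℝ :=
  ∑ j ∈ range N, trw R L j ω * (x j ω - a * R j ω)

/-- Exponential process. -/
def Zt (R x : ℕ → Ω → ℝ) (a L t : ℝ) (N : ℕ) (ω : Ω) : ℂ :=
  Complex.exp ((t ^ 2 / 2 * ∑ j ∈ range N, trw R L j ω ^ 2 : ℝ) : ℂ) *
    Complex.exp (((t * Mt R x a L N ω : ℝ) : ℂ) * Complex.I)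

lemma Walk.bMt (h : Walk μ G R x a) (L : ℝ) (N : ℕ) : BM (G N) (Mt R x a L N) :=
  BM.sum N fun i hi => ((h.br L i).mono (G.mono (by omega))).mul
    ((h.bxi i).mono (G.mono (by omega)))

lemma Walk.bQ (h : Walk μ G R x a) (L : ℝ) (N : ℕ) :
    BM (G N) (fun ω => ∑ j ∈ range N, trw R L j ω ^ 2) :=
  BM.sum N fun i hi => ((h.br L i).mono (G.mono (by omega))).pow 2

lemma Walk.bZt (h : Walk μ G R x a) (L t : ℝ) (N : ℕ) : BM (G N) (Zt R x a L t N) :=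
  ((BM.const _).mul (h.bQ L N)).ofReal.cexp.mul
    (((BM.const t).mul (h.bMt L N)).ofReal.mul (BM.const _)).cexp

lemma Zt_norm {L : ℝ} (hL : 0 < L) (t : ℝ) (N : ℕ) (ω : Ω) :
    ‖Zt R x a L t N ω‖ ≤ Real.exp (t ^ 2) := by
  rw [Zt, norm_mul, Complex.norm_exp_ofReal_mul_I, mul_one, Complex.norm_exp, Complex.ofReal_re]
  refine Real.exp_le_exp.2 ?_
  nlinarith [Q_le (R := R) hL N ω, sq_nonneg t]

lemma Walk.Z_step (h : Walk μ G R x a) {L : ℝ} (hL : 1 ≤ L) (t : ℝ) (N : ℕ) :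
    ‖(∫ ω, Zt R x a L t (N + 1) ω ∂μ) - ∫ ω, Zt R x a L t N ω ∂μ‖ ≤
      Real.exp (t ^ 2) * Kt t * ((∫ ω, R N ω ^ 4 ∂μ) / L + (∫ ω, trw R L N ω ^ 2 ∂μ) / √L) := by
  have hL0 : 0 < L := by linarith
  have hs : 1 ≤ √L := Real.one_le_sqrt.2 hL
  set W : Ω → ℂ := fun ω => Complex.exp ((t ^ 2 / 2 * trw R L N ω ^ 2 : ℝ) : ℂ) *
    (((t * trw R L N ω : ℝ) : ℂ) * Complex.I
          + ((t ^ 2 * trw R L N ω ^ 2 * a * R N ω : ℝ) : ℂ)) with hW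
  have br := h.br L N
  have bW : BM (G N) W :=
    ((BM.const _).mul (br.pow 2)).ofReal.cexp.mul
      ((((BM.const t).mul br).ofReal.mul (BM.const _)).add
        ((((BM.const (t ^ 2)).mul (br.pow 2)).mul (BM.const a)).mul (h.bR N)).ofReal)
  have bZW : BM (G N) (fun ω => Zt R x a L t N ω * W ω) := (h.bZt L t N).mul bW
  have o := h.orth_c N bZW
  have b1 : BM m0 (Zt R x a L t (N + 1)) := (h.bZt L t (N + 1)).mono (G.le _)
  have b0 : BM m0 (Zt R x a L t N) := (h.bZt L t N).mono (G.le _)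
  have b2 : BM m0 (fun ω => Zt R x a L t N ω * W ω * ((x N ω - a * R N ω : ℝ) : ℂ)) :=
    (bZW.mono (G.le _)).mul (h.bxi0 N).ofReal
  have br0 : BM m0 (trw R L N) := br.mono (G.le _)
  have e : (∫ ω, Zt R x a L t (N + 1) ω ∂μ) - ∫ ω, Zt R x a L t N ω ∂μ
      = ∫ ω, (Zt R x a L t (N + 1) ω - Zt R x a L t N ω
        - Zt R x a L t N ω * W ω * ((x N ω - a * R N ω : ℝ) : ℂ)) ∂μ := by
    rw [integral_sub (b1.sub b0).integrable b2.integrable, o, sub_zero,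
      integral_sub b1.integrable b0.integrable]
  have c1 : BM m0 (fun ω => R N ω ^ 4 / L) := ((h.bR0 N).pow 4).div_const _
  have c2 : BM m0 (fun ω => trw R L N ω ^ 2 / √L) := (br0.pow 2).div_const _
  rw [e]
  calc _ ≤ ∫ ω, Real.exp (t ^ 2) * Kt t * (R N ω ^ 4 / L + trw R L N ω ^ 2 / √L) ∂μ := by
        refine norm_integral_le_of_norm_le ((BM.const _).mul (c1.add c2)).integrable
          (ae_of_all _ fun ω => ?_)
        have est := taylor_est (t := t) (R' := R N ω) hs (h.r_le L N ω) h.ha (h.x_sq N ω)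
          (h.xi_le N ω)
        have zs : Zt R x a L t (N + 1) ω = Zt R x a L t N ω *
            (Complex.exp ((t ^ 2 / 2 * trw R L N ω ^ 2 : ℝ) : ℂ) *
              Complex.exp (((t * (trw R L N ω * (x N ω - a * R N ω)) : ℝ) : ℂ)
              * Complex.I)) := by
          simp only [Zt, Mt, sum_range_succ]
          simp only [← Complex.exp_add]
          congr 1
          push_cast
          ring
        have fac : Zt R x a L t (N + 1) ω - Zt R x a L t N ω
            - Zt R x a L t N ω * W ω * ((x N ω - a * R N ω : ℝ) : ℂ) =
            Zt R x a L t N ω * (Complex.exp ((t ^ 2 / 2 * trw R L N ω ^ 2 : ℝ) : ℂ) *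
              Complex.exp (((t * (trw R L N ω * (x N ω - a * R N ω)) : ℝ) : ℂ)
              * Complex.I) - 1 - W ω * ((x N ω - a * R N ω : ℝ) : ℂ)) := by
          rw [zs]; ring
        rw [fac, norm_mul, mul_assoc (Real.exp (t ^ 2))]
        refine mul_le_mul (Zt_norm hL0 t N ω) (est.trans ?_) (norm_nonneg _) (Real.exp_pos _).le
        refine mul_le_mul_of_nonneg_left (add_le_add ?_ le_rfl) (Kt_nonneg t)
        have := mul_le_mul_of_nonneg_right (r_sq_le (R := R) hL0 N ω) (sq_nonneg (R N ω))
        refine this.trans (le_of_eq ?_)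
        ring
    _ = _ := by
        rw [integral_const_mul, integral_add c1.integrable c2.integrable, integral_div,
          integral_div]

lemma Walk.Z_bound (h : Walk μ G R x a) {C : ℝ}
    (hC : ∀ j : ℕ, ((j : ℝ) + 1) ^ 2 * ∫ ω, R j ω ^ 4 ∂μ ≤ C) (hC0 : 0 ≤ C)
    {L : ℝ} (hL : 1 ≤ L) (t : ℝ) (N : ℕ) :
    ‖(∫ ω, Zt R x a L t N ω ∂μ) - 1‖ ≤ Real.exp (t ^ 2) * Kt t * ((2 * C + 2) / √L) := by
  have hL0 : 0 < L := by linarith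
  have hs : 1 ≤ √L := Real.one_le_sqrt.2 hL
  have hK := Kt_nonneg t
  have st : ‖(∫ ω, Zt R x a L t N ω ∂μ) - 1‖ ≤ ∑ j ∈ range N, Real.exp (t ^ 2) * Kt t *
      ((∫ ω, R j ω ^ 4 ∂μ) / L + (∫ ω, trw R L j ω ^ 2 ∂μ) / √L) := by
    induction N with
    | zero => simp [Zt, Mt]
    | succ N ih =>
      rw [sum_range_succ]
      calc _ = ‖((∫ ω, Zt R x a L t N ω ∂μ) - 1) + ((∫ ω, Zt R x a L t (N + 1) ω ∂μ)
              - ∫ ω, Zt R x a L t N ω ∂μ)‖ := by congr 1; ring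
        _ ≤ _ := (norm_add_le _ _).trans (add_le_add ih (h.Z_step hL t N))
  refine st.trans ?_
  rw [← mul_sum]
  refine mul_le_mul_of_nonneg_left ?_ (by positivity)
  rw [sum_add_distrib, ← sum_div, ← sum_div, add_div]
  refine add_le_add ?_ ?_
  · have s1 : ∑ j ∈ range N, ∫ ω, R j ω ^ 4 ∂μ ≤ 2 * C := by
      calc _ ≤ ∑ j ∈ range N, 2 * C * (1 / (((j : ℝ) + 1) * ((j : ℝ) + 2))) := by
            refine sum_le_sum fun j _ => ?_
            have i1 : ∫ ω, R j ω ^ 4 ∂μ ≤ C / ((j : ℝ) + 1) ^ 2 := by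
              rw [le_div_iff₀ (by positivity), mul_comm]; exact hC j
            refine i1.trans ?_
            rw [mul_one_div, div_le_div_iff₀ (by positivity) (by positivity)]
            have hj : (0 : ℝ) ≤ j := by positivity
            have : ((j : ℝ) + 1) * ((j : ℝ) + 2) ≤ 2 * ((j : ℝ) + 1) ^ 2 := by nlinarith
            nlinarith [mul_le_mul_of_nonneg_left this hC0]
        _ ≤ _ := by
            rw [← mul_sum]
            exact mul_le_of_le_one_right (by positivity) (telesum N)
    have s2 : √L ≤ L := by
      have := Real.mul_self_sqrt hL0.le
      nlinarith
    gcongr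
  · have : ∑ j ∈ range N, ∫ ω, trw R L j ω ^ 2 ∂μ ≤ 2 := by
      rw [← integral_finsetSum _ fun i _ => (((h.br L i).mono (G.le _)).pow 2).integrable]
      have := integral_mono (μ := μ) (((h.bQ L N).mono (G.le _)).integrable) (integrable_const 2)
        (fun ω => Q_le hL0 N ω)
      simpa using this
    gcongr

lemma Walk.char_bound (h : Walk μ G R x a) {C : ℝ}
    (hC : ∀ j : ℕ, ((j : ℝ) + 1) ^ 2 * ∫ ω, R j ω ^ 4 ∂μ ≤ C) (hC0 : 0 ≤ C)
    {L : ℝ} (hL : 1 ≤ L) (t : ℝ) (N : ℕ) :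
    ‖(∫ ω, Complex.exp (((t * Mt R x a L N ω : ℝ) : ℂ) * Complex.I) ∂μ)
        - Complex.exp ((-(t ^ 2 / 2) : ℝ) : ℂ)‖
      ≤ Real.exp (t ^ 2) * Kt t * ((2 * C + 2) / √L)
        + Real.exp (t ^ 2) * (t ^ 2 / 2) * ∫ ω, |Usum R N ω / L - 1| ∂μ := by
  have hL0 : 0 < L := by linarith
  have bZ : BM m0 (Zt R x a L t N) := (h.bZt L t N).mono (G.le _)
  have bM : BM m0 (fun ω => Complex.exp (((t * Mt R x a L N ω : ℝ) : ℂ) * Complex.I)) :=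
    ((((BM.const t).mul (h.bMt L N)).ofReal.mul (BM.const _)).cexp).mono (G.le _)
  set q : ℂ := Complex.exp ((-(t ^ 2 / 2) : ℝ) : ℂ) with hq
  have bqZ : BM m0 (fun ω => q * Zt R x a L t N ω) := (BM.const q).mul bZ
  have e : (∫ ω, Complex.exp (((t * Mt R x a L N ω : ℝ) : ℂ) * Complex.I) ∂μ) - q
      = q * ((∫ ω, Zt R x a L t N ω ∂μ) - 1)
        + ∫ ω, (Complex.exp (((t * Mt R x a L N ω : ℝ) : ℂ) * Complex.I)
          - q * Zt R x a L t N ω) ∂μ := by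
    rw [integral_sub bM.integrable bqZ.integrable, integral_const_mul]; ring
  have hq1 : ‖q‖ ≤ 1 := by
    rw [hq, Complex.norm_exp, Complex.ofReal_re]
    exact Real.exp_le_one_iff.2 (by nlinarith [sq_nonneg t])
  rw [e]
  refine (norm_add_le _ _).trans (add_le_add ?_ ?_)
  · rw [norm_mul]
    exact (mul_le_of_le_one_left (norm_nonneg _) hq1).trans (h.Z_bound hC hC0 hL t N)
  · rw [← integral_const_mul]
    refine norm_integral_le_of_norm_le ((BM.const _).mul
      (((h.bU N).div_const _).sub (BM.const _)).abs).integrable (ae_of_all _ fun ω => ?_)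
    set Q := ∑ j ∈ range N, trw R L j ω ^ 2 with hQ
    have hQ2 : Q ≤ 2 := Q_le hL0 N ω
    have hQ0 : 0 ≤ Q := sum_nonneg fun _ _ => sq_nonneg _
    have f : Complex.exp (((t * Mt R x a L N ω : ℝ) : ℂ) * Complex.I) - q * Zt R x a L t N ω
        = ((1 - Real.exp (t ^ 2 / 2 * (Q - 1)) : ℝ) : ℂ)
          * Complex.exp (((t * Mt R x a L N ω : ℝ) : ℂ) * Complex.I) := by
      rw [Zt, hq, ← mul_assoc, ← Complex.exp_add, ← hQ]
      push_cast
      rw [show -((t : ℂ) ^ 2 / 2) + (t : ℂ) ^ 2 / 2 * (Q : ℂ) = (t : ℂ) ^ 2 / 2 * ((Q : ℂ) - 1)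
        by ring]
      ring
    rw [f, norm_mul, Complex.norm_exp_ofReal_mul_I, mul_one, Complex.norm_real, Real.norm_eq_abs]
    set v := t ^ 2 / 2 * (Q - 1) with hv
    have hvt : v ≤ t ^ 2 := by rw [hv]; nlinarith [sq_nonneg t]
    have hvb : |1 - Real.exp v| ≤ Real.exp (t ^ 2) * |v| := by
      have k1 := Real.add_one_le_exp v
      have k2 := Real.add_one_le_exp (-v)
      have k3 : Real.exp v * Real.exp (-v) = 1 := by rw [← Real.exp_add]; simp
      have k4 : Real.exp v ≤ Real.exp (t ^ 2) := Real.exp_le_exp.2 hvt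
      have k5 : 1 ≤ Real.exp (t ^ 2) := Real.one_le_exp (sq_nonneg t)
      have k6 : Real.exp v - 1 ≤ Real.exp v * v := by
        have := mul_le_mul_of_nonneg_left k2 (Real.exp_pos v).le
        linarith
      rw [abs_le]
      constructor
      · have : Real.exp v * v ≤ Real.exp (t ^ 2) * |v| :=
          (mul_le_mul_of_nonneg_left (le_abs_self v) (Real.exp_pos v).le).trans
            (mul_le_mul_of_nonneg_right k4 (abs_nonneg v))
        linarith
      · nlinarith [neg_abs_le v, abs_nonneg v]
    refine hvb.trans ?_
    rw [hv, abs_mul, abs_of_nonneg (by positivity : 0 ≤ t ^ 2 / 2), ← mul_assoc]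
    exact mul_le_mul_of_nonneg_left (Q_sub hL0 N ω) (by positivity)


/-- The normalizing sequence. -/
def Lseq (a : ℝ) (N : ℕ) : ℝ := hsum N / (1 - 2 * a)

lemma Walk.Lseq_tendsto (h : Walk μ G R x a) : Tendsto (Lseq a) atTop atTop :=
  hsum_tendsto.atTop_div_const (by linarith [h.ha2])

lemma Walk.lln_tendsto (h : Walk μ G R x a) :
    Tendsto (fun N => ∫ ω, |Usum R N ω / Lseq a N - 1| ∂μ) atTop (𝓝 0) := by
  obtain ⟨K, hK⟩ := h.lln
  refine squeeze_zero' (g := fun N => K / √(hsum N))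
    (Eventually.of_forall fun N => integral_nonneg fun ω => abs_nonneg _)
    ((eventually_ge_atTop 1).mono fun N hN => hK N hN) ?_
  exact tendsto_const_nhds.div_atTop (Real.tendsto_sqrt_atTop.comp hsum_tendsto)

lemma Walk.meas_tendsto (h : Walk μ G R x a) {δ : ℝ} (hδ : 0 < δ) :
    Tendsto (fun N => μ {ω | δ ≤ |Usum R N ω / Lseq a N - 1|}) atTop (𝓝 0) := by
  have b : ∀ N, BM m0 (fun ω => |Usum R N ω / Lseq a N - 1|) := fun N =>
    (((h.bU N).div_const _).sub (BM.const 1)).abs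
  have key : ∀ N, μ.real {ω | δ ≤ |Usum R N ω / Lseq a N - 1|}
      ≤ (∫ ω, |Usum R N ω / Lseq a N - 1| ∂μ) / δ := fun N => by
    rw [le_div_iff₀ hδ, mul_comm]
    exact mul_meas_ge_le_integral_of_nonneg (Eventually.of_forall fun ω => abs_nonneg _)
      (b N).integrable δ
  have t0 : Tendsto (fun N => μ.real {ω | δ ≤ |Usum R N ω / Lseq a N - 1|}) atTop (𝓝 0) := by
    refine squeeze_zero (fun N => measureReal_nonneg) key ?_
    simpa using h.lln_tendsto.div_const δ
  have := (ENNReal.tendsto_ofReal t0)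
  simpa using this

lemma Walk.charFun_tendsto (h : Walk μ G R x a) (t : ℝ) :
    Tendsto (fun N => ∫ ω, Complex.exp (((t * Mt R x a (Lseq a N) N ω : ℝ) : ℂ) * Complex.I) ∂μ)
      atTop (𝓝 (Complex.exp ((-(t ^ 2 / 2) : ℝ) : ℂ))) := by
  obtain ⟨C, hC0, hC⟩ := h.mom4
  rw [tendsto_iff_norm_sub_tendsto_zero]
  refine squeeze_zero' (g := fun N => Real.exp (t ^ 2) * Kt t * ((2 * C + 2) / √(Lseq a N))
        + Real.exp (t ^ 2) * (t ^ 2 / 2) * ∫ ω, |Usum R N ω / Lseq a N - 1| ∂μ)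
    (Eventually.of_forall fun N => norm_nonneg _)
    ((h.Lseq_tendsto.eventually_ge_atTop 1).mono fun N hN => h.char_bound hC hC0 hN t N) ?_
  have t1 : Tendsto (fun N => (2 * C + 2) / √(Lseq a N)) atTop (𝓝 0) :=
    tendsto_const_nhds.div_atTop (Real.tendsto_sqrt_atTop.comp h.Lseq_tendsto)
  simpa using (t1.const_mul (Real.exp (t ^ 2) * Kt t)).add
    (h.lln_tendsto.const_mul (Real.exp (t ^ 2) * (t ^ 2 / 2)))

lemma Walk.mMt (h : Walk μ G R x a) (L : ℝ) (N : ℕ) : Measurable (Mt R x a L N) :=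
  ((h.bMt L N).mono (G.le _)).1

lemma Walk.Mt_dist (h : Walk μ G R x a) :
    TendstoInDistribution (fun N => Mt R x a (Lseq a N) N) atTop id (fun _ => μ)
      (gaussianReal 0 1) where
  forall_aemeasurable N := (h.mMt _ _).aemeasurable
  tendsto := by
    refine ProbabilityMeasure.tendsto_iff_tendsto_charFun.2 fun t => ?_
    have e := h.charFun_tendsto t
    simp only [ProbabilityMeasure.coe_mk, Measure.map_id, charFun_gaussianReal]
    convert e using 2 with N
    · rw [charFun_apply_real, integral_map (h.mMt _ _).aemeasurable
        (Measurable.aestronglyMeasurable (by fun_prop))]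
      push_cast
      rfl
    · push_cast
      congr 1
      simp

lemma Walk.g_meas (h : Walk μ G R x a) :
    TendstoInMeasure μ (fun N ω => 1 / √(Usum R N ω / Lseq a N)) atTop (fun _ => (1 : ℝ)) := by
  rw [tendstoInMeasure_iff_norm]
  intro ε hε
  have hc : ContinuousAt (fun u : ℝ => 1 / √u) 1 :=
    continuousAt_const.div Real.continuous_sqrt.continuousAt (by simp)
  obtain ⟨δ, hδ, hd⟩ := Metric.continuousAt_iff.1 hc ε hε
  refine tendsto_of_tendsto_of_tendsto_of_le_of_le tendsto_const_nhds (h.meas_tendsto hδ)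
    (fun _ => zero_le) fun N => measure_mono fun ω hω => ?_
  simp only [Set.mem_ofPred_eq] at hω ⊢
  by_contra hcon
  push Not at hcon
  have := hd (x := Usum R N ω / Lseq a N) (by rwa [Real.dist_eq])
  rw [Real.dist_eq] at this
  simp only [Real.sqrt_one, div_one, Real.norm_eq_abs] at this hω
  linarith

/-- The self-normalized sum. -/
def Yn (R x : ℕ → Ω → ℝ) (a : ℝ) (N : ℕ) (ω : Ω) : ℝ :=
  (∑ j ∈ range N, R j ω * (x j ω - a * R j ω)) / √(Usum R N ω)

lemma Yn_eq {N : ℕ} {ω : Ω} (hL : 0 < Lseq a N) (hU : Usum R N ω ≤ 2 * Lseq a N) :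
    Yn R x a N ω = Mt R x a (Lseq a N) N ω * (1 / √(Usum R N ω / Lseq a N)) := by
  have : Mt R x a (Lseq a N) N ω
      = (∑ j ∈ range N, R j ω * (x j ω - a * R j ω)) / √(Lseq a N) := by
    rw [Mt, sum_div]
    refine sum_congr rfl fun j hj => ?_
    rw [r_eq hU (mem_range.1 hj)]; ring
  rw [this, Yn, Real.sqrt_div' _ hL.le]
  have : √(Lseq a N) ≠ 0 := (Real.sqrt_pos.2 hL).ne'
  by_cases h0 : √(Usum R N ω) = 0
  · simp [h0]
  · generalize ∑ j ∈ range N, R j ω * (x j ω - a * R j ω) = T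
    field_simp

lemma Walk.mYn (h : Walk μ G R x a) (N : ℕ) : Measurable (Yn R x a N) := by
  have m1 : ∀ j, Measurable (R j) := fun j => (h.hR j).mono (G.le _) le_rfl
  have m2 : ∀ j, Measurable (x j) := fun j => (h.hx j).mono (G.le _) le_rfl
  have m3 : Measurable (Usum R N) := (h.bU N).1
  unfold Yn
  fun_prop

lemma Walk.Yn_dist (h : Walk μ G R x a) :
    TendstoInDistribution (Yn R x a) atTop id (fun _ => μ) (gaussianReal 0 1) := by
  have m3 : ∀ N, Measurable (Usum R N) := fun N => (h.bU N).1
  have s := h.Mt_dist.continuous_comp_prodMk_of_tendstoInMeasure_const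
    (g := fun z : ℝ × ℝ => z.1 * z.2) (by fun_prop) h.g_meas
    (fun N => Measurable.aemeasurable (by have := m3 N; fun_prop))
  simp only [id, mul_one] at s
  refine tendstoInDistribution_of_tendstoInMeasure_sub _ _ s ?_ fun N => (h.mYn N).aemeasurable
  intro ε hε
  refine tendsto_of_tendsto_of_tendsto_of_le_of_le' tendsto_const_nhds
    (h.meas_tendsto one_pos) (Eventually.of_forall fun _ => zero_le) ?_
  filter_upwards [h.Lseq_tendsto.eventually_gt_atTop 0] with N hN
  refine measure_mono fun ω hω => ?_
  simp only [Set.mem_ofPred_eq] at hω ⊢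
  by_contra hcon
  push Not at hcon
  have hU : Usum R N ω ≤ 2 * Lseq a N := by
    have := (abs_lt.1 hcon).2
    rw [← div_le_iff₀ hN]; linarith
  rw [Pi.sub_apply, Pi.sub_apply, Yn_eq hN hU] at hω
  simp at hω
  exact absurd hω hε.ne'

lemma Walk.Yn_int (h : Walk μ G R x a) (f : ℝ →ᵇ ℝ) :
    Tendsto (fun N => ∫ ω, f (Yn R x a N ω) ∂μ) atTop (𝓝 (∫ y, f y ∂(gaussianReal 0 1))) := by
  have := (ProbabilityMeasure.tendsto_iff_forall_integral_tendsto.1 h.Yn_dist.tendsto) f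
  simp only [ProbabilityMeasure.coe_mk, Measure.map_id] at this
  refine this.congr fun N => ?_
  rw [integral_map (h.mYn N).aemeasurable f.continuous.measurable.aestronglyMeasurable]

end WalkLemmas

lemma erwS_abs_le {X : ℕ → Ω → ℝ} (hX : ∀ n, 1 ≤ n → ∀ ω, X n ω = 1 ∨ X n ω = -1)
    (n : ℕ) (ω : Ω) : |erwS X n ω| ≤ n := by
  calc |erwS X n ω| ≤ ∑ k ∈ Finset.Icc 1 n, |X k ω| := abs_sum_le_sum_abs _ _
    _ ≤ ∑ k ∈ Finset.Icc 1 n, (1 : ℝ) := by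
        refine sum_le_sum fun k hk => ?_
        rcases hX k (Finset.mem_Icc.1 hk).1 ω with h | h <;> simp [h]
    _ = n := by simp

lemma erwS_succ (X : ℕ → Ω → ℝ) (n : ℕ) (ω : Ω) :
    erwS X (n + 1) ω = erwS X n ω + X (n + 1) ω := by
  unfold erwS
  rw [Finset.sum_Icc_succ_top (by omega)]

/-- The filtration shifted by one. -/
def shiftFil {m0 : MeasurableSpace Ω} (F : Filtration ℕ m0) : Filtration ℕ m0 where
  seq j := F (j + 1)
  mono' _ _ hij := F.mono (by omega)
  le' j := F.le _

lemma erwS_meas {m0 : MeasurableSpace Ω} {F : Filtration ℕ m0} {X : ℕ → Ω → ℝ}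
    (hX : ∀ n, 1 ≤ n → Measurable[F n] (X n)) (n : ℕ) : Measurable[F n] (erwS X n) := by
  unfold erwS
  refine Finset.measurable_fun_sum _ fun k hk => ?_
  have := Finset.mem_Icc.1 hk
  exact (hX k this.1).mono (F.mono this.2) le_rfl

lemma erw_walk {m0 : MeasurableSpace Ω} {μ : Measure Ω} [IsProbabilityMeasure μ]
    {F : Filtration ℕ m0} {X : ℕ → Ω → ℝ} {p : ℝ}
    (hERW : IsERW μ F X p) (hp : p < 3 / 4) :
    Walk μ (shiftFil F) (fun j ω => erwS X (j + 1) ω / ((j + 1 : ℕ) : ℝ)) (fun j => X (j + 2))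
      (2 * p - 1) := by
  obtain ⟨h0, h1, hX, hm, hc⟩ := hERW
  have hR : ∀ j, Measurable[F (j + 1)] (fun ω => erwS X (j + 1) ω / ((j + 1 : ℕ) : ℝ)) :=
    fun j => (erwS_meas hm _).div_const _
  have hR1 : ∀ (j : ℕ) ω, |erwS X (j + 1) ω / ((j + 1 : ℕ) : ℝ)| ≤ 1 := fun j ω => by
    rw [abs_div, Nat.abs_cast]
    exact div_le_one_of_le₀ (erwS_abs_le hX _ _) (by positivity)
  refine ⟨hR, hR1, fun j => hm (j + 2) (by omega), fun j ω => hX _ (by omega) ω, ?_, ?_, ?_, ?_, ?_⟩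
  · intro j W hW
    have bX : BM m0 (X (j + 2)) := ⟨(hm _ (by omega)).mono (F.le _) le_rfl, 1, fun ω => by
      rcases hX (j + 2) (by omega) ω with h | h <;> simp [h]⟩
    have bR : BM m0 (fun ω => erwS X (j + 1) ω / ((j + 1 : ℕ) : ℝ)) :=
      ⟨(hR j).mono (F.le _) le_rfl, 1, fun ω => hR1 j ω⟩
    have bW : BM m0 W := hW.mono (F.le _)
    have hWs : StronglyMeasurable[F (j + 1)] W := hW.1.stronglyMeasurable
    have e1 : μ[W * X (j + 2) | F (j + 1)] =ᵐ[μ] W * μ[X (j + 2) | F (j + 1)] :=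
      condExp_mul_of_stronglyMeasurable_left hWs (bW.mul bX).integrable bX.integrable
    have e2 : ∫ ω, W ω * X (j + 2) ω ∂μ
        = ∫ ω, W ω * ((2 * p - 1) * (erwS X (j + 1) ω / ((j + 1 : ℕ) : ℝ))) ∂μ := by
      have := integral_condExp (μ := μ) (f := W * X (j + 2)) (F.le (j + 1))
      simp only [Pi.mul_apply] at this
      rw [← this]
      refine integral_congr_ae ?_
      filter_upwards [e1, hc (j + 1) (by omega)] with ω w1 w2
      rw [w1, Pi.mul_apply, w2]
    simp only [mul_sub]
    rw [integral_sub (bW.mul bX).integrable (bW.mul ((BM.const _).mul bR)).integrable, e2, sub_self]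
  · intro j ω
    have := erwS_succ X (j + 1) ω
    have e : ((j : ℝ) + 1) ≠ 0 := by positivity
    have e' : ((j : ℝ) + 1 + 1) ≠ 0 := by positivity
    simp only [this]
    push_cast
    field_simp
    ring
  · rw [abs_le]; constructor <;> linarith
  · linarith
  · intro ω
    rcases hX 1 le_rfl ω with h | h <;> simp [erwS, h]

lemma sum_Icc_shift (f : ℕ → ℝ) (N : ℕ) : ∑ k ∈ Finset.Icc 1 N, f k = ∑ j ∈ range N, f (j + 1) := by
  induction N with
  | zero => simp
  | succ N ih => rw [Finset.sum_Icc_succ_top (by omega), ih, sum_range_succ]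

lemma erw_eq_Yn (X : ℕ → Ω → ℝ) (p : ℝ) (N : ℕ) (ω : Ω)
    (hU : 0 < Usum (fun j ω => erwS X (j + 1) ω / ((j + 1 : ℕ) : ℝ)) N ω) :
    Real.sqrt (erwV X (N + 1) ω) * (erwPhat X (N + 1) ω - p)
      = Yn (fun j ω => erwS X (j + 1) ω / ((j + 1 : ℕ) : ℝ)) (fun j => X (j + 2))
        (2 * p - 1) N ω := by
  unfold erwV erwPhat Yn
  simp only [Nat.add_sub_cancel, sum_Icc_shift]
  have eU : ∑ j ∈ range N, (erwS X (j + 1) ω / ((j + 1 : ℕ) : ℝ)) ^ 2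
    = Usum (fun j ω => erwS X (j + 1) ω / ((j + 1 : ℕ) : ℝ)) N ω := rfl
  rw [eU]
  set U := Usum (fun j ω => erwS X (j + 1) ω / ((j + 1 : ℕ) : ℝ)) N ω
  have e1 : ∑ j ∈ range N, (erwS X (j + 1) ω / ((j + 1 : ℕ) : ℝ))
        * (X (j + 1 + 1) ω + erwS X (j + 1) ω / ((j + 1 : ℕ) : ℝ))
      = ∑ j ∈ range N, (erwS X (j + 1) ω / ((j + 1 : ℕ) : ℝ))
        * (X (j + 2) ω - (2 * p - 1) * (erwS X (j + 1) ω / ((j + 1 : ℕ) : ℝ))) + 2 * p * U := by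
    rw [← eU, mul_sum, ← sum_add_distrib]
    refine sum_congr rfl fun j _ => ?_
    ring
  rw [e1]
  have hs : √(4 * U) = 2 * √U := by
    rw [Real.sqrt_mul (by norm_num), show (4 : ℝ) = 2 ^ 2 by norm_num, Real.sqrt_sq (by norm_num)]
  rw [hs]
  have hp : 0 < √U := Real.sqrt_pos.2 hU
  have hq : U = √U ^ 2 := (Real.sq_sqrt hU.le).symm
  generalize ∑ j ∈ range N, (erwS X (j + 1) ω / ((j + 1 : ℕ) : ℝ))
        * (X (j + 2) ω - (2 * p - 1) * (erwS X (j + 1) ω / ((j + 1 : ℕ) : ℝ))) = T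
  generalize √U = s at *
  rw [hq]
  field_simp
  ring

/-- In the diffusive regime `0 ≤ p < 3/4`, `√(V_n) (p̂_n - p)` converges in distribution
to the standard Gaussian law. -/
theorem erw_self_normalized_clt_diffusive
    {m0 : MeasurableSpace Ω} (μ : Measure Ω) [IsProbabilityMeasure μ]
    (ℱ : Filtration ℕ m0) (X : ℕ → Ω → ℝ) (p : ℝ)
    (hERW : IsERW μ ℱ X p) (hp : p < 3 / 4) :
    ∀ f : ℝ →ᵇ ℝ,
      Tendsto (fun n => ∫ ω, f (Real.sqrt (erwV X n ω) * (erwPhat X n ω - p)) ∂μ)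
        atTop (𝓝 (∫ x, f x ∂(gaussianReal 0 1))) := by

  intro f
  have hw := erw_walk hERW hp
  rw [← tendsto_add_atTop_iff_nat 1]
  refine (hw.Yn_int f).congr' ?_
  filter_upwards [eventually_ge_atTop 1] with N hN
  refine integral_congr_ae (Eventually.of_forall fun ω => ?_)
  have hU : 0 < Usum (fun j ω => erwS X (j + 1) ω / ((j + 1 : ℕ) : ℝ)) N ω := by
    refine lt_of_lt_of_le ?_ (Usum_mono ω hN)
    have := hw.hR0 ω
    simp only [Usum, sum_range_one]
    rw [this]; exact one_pos
  exact congrArg f (erw_eq_Yn X p N ω hU).symm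
end
end
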